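/- (Sequential convergence and analyticity at the limit imply full convergence at a polynomial rate.) Let f : ℝⁿ → ℝ be C¹, let y ∈ ℝⁿ be a point with ∇f(y) = 0 such that f is real analytic on some open neighborhood of y, and let ξ : [0,∞) → ℝⁿ be a C¹ curve with ξ'(t) = -∇f(ξ(t)) for all t ≥ 0. Suppose there exists a sequence of times tᵢ → ∞ such that ξ(tᵢ) → y. Then ξ(t) → y as t → ∞; moreover there exist constants β > 0, C > 0 and T ≥ 0 such that |ξ(t) - y| ≤ C·(t - T)^{-β} for all t > T. In particular the limit y is independent of the chosen sequence tᵢ. -/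

import Mathlib

/-!
The theorem follows from the Łojasiewicz gradient inequality `|f x - f y| ^ θ ≤ C * ‖∇f x‖` near
`y`, with some `1/2 < θ < 1` (`lojasiewicz`).  Write `F t = f (ξ t) - f y`, which is nonincreasing
and tends to `0` because it does so along the given times.  Along the flow `F' = -‖∇f‖²`, so the
inequality gives `‖ξ'‖ ≤ -(C / (1 - θ)) * (F ^ (1 - θ))'`.  Hence the length still to be travelled
is at most `C / (1 - θ) * F ^ (1 - θ)` (`dist_le_drop`), which traps the trajectory near `y` once
it has come close enough, and bounds `‖ξ t - y‖`.  Also `F' ≤ -F ^ (2 θ) / C²`, so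
`F ^ (1 - 2 θ)` grows at least linearly (`energy_decay`); combining the two bounds gives the rate
with `β = (1 - θ) / (2 θ - 1)`.

The gradient inequality is clear for a monomial times a unit (`lojasiewicz_NC`): by Euler's
relation `w k * ∂ₖh` is comparable to `h` for each `k` that occurs in the monomial, and one
multiplies these bounds.  It pulls back badly but pushes forward well: if `f ∘ φ` satisfies it, so
does `f` at the points `φ w`.  It is therefore enough to find, for points `X i → 0` along an
ultrafilter, *one* analytic chart `φ` through which these points lift to points tending to `0`,
and in which `f ∘ φ` is a monomial times a unit or vanishes (`LU.all`, local uniformization).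
Working along an ultrafilter decides every case distinction of the resolution process and
provides all limits of bounded quantities, so that no global blow-up is needed.  A failure of the
inequality for all `θ` and `C` yields a sequence of points that contradicts this
(`lojasiewicz_zero`).

Local uniformization goes by induction on the number of variables.  After a linear change a nonzero
germ is regular of some order `d` in the last variable `z`, and one inducts on `d` (`reg_all`).
For `d = m + 1`, a Tschirnhausen transformation (`tschirnhausen`) brings the germ to the form
`∑ i < m, c i x * z ^ i + z ^ (m + 1) * u` with a unit `u`; the missing term of degree `m` is what
makes the order drop later.  By induction on the dimension, the coefficients `c i` and the
differences of their powers of equal weight become normal crossings in one chart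
(`LU.simultaneous`).  This forces the monomials to be totally ordered by divisibility
(`monomials_comparable`), so after a power substitution `c i = a i * μ ^ (m + 1 - i)` for one
monomial `μ`, with some `a i` a unit (`reg_of_prepared`).  If `z = O(μ)` along the
ultrafilter, substituting `z = μ * (w₀ + w)` lowers the order (`root_order_lt`).  Otherwise
`μ / z → 0`, finitely many toric blow-ups make `z` divide `μ` (`principalize`), and the term
`z ^ (m + 1) * u` dominates (`reg_of_monomial`).
-/

namespace GradFlow

open Filter Topology

/-! ### Hadamard division of analytic germs -/

/-- Multilinear Hadamard division: telescoping `p (v, …, v) - p (π v, …, π v)` one slot at a time,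
where `v - π v = c v • e`. -/
lemma multilinear_telescope {G : Type*} [NormedAddCommGroup G] [NormedSpace ℝ G]
    (c : G →L[ℝ] ℝ) (e : G) (π : G →L[ℝ] G) (hπ : ∀ v, v - π v = c v • e) (m : ℕ)
    (p : G [×(m + 1)]→L[ℝ] ℝ) (v : G) :
    p (fun _ => v) - p (fun _ => π v) =
      c v * ∑ j : Fin (m + 1), p.curryMid j e
        (fun i => (if (j.succAbove i).val < j.val then π else ContinuousLinearMap.id ℝ G) v) := by
  set T : ℕ → ℝ := fun k => p (fun i : Fin (m + 1) => if i.val < k then π v else v) with hT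
  have h0 : T 0 = p (fun _ => v) := by simp [hT]
  have h1 : T (m + 1) = p (fun _ => π v) := by
    simp only [hT]
    congr 1
    ext i
    simp [i.isLt]
  rw [← h0, ← h1, ← Finset.sum_range_sub', Finset.sum_range, Finset.mul_sum]
  refine Finset.sum_congr rfl fun j _ => ?_
  set rest : Fin m → G := fun i =>
    (if (j.succAbove i).val < j.val then π else ContinuousLinearMap.id ℝ G) v with hrest
  have hA : (fun i : Fin (m + 1) => if i.val < j.val then π v else v) = j.insertNth v rest := by
    refine (Fin.insertNth_eq_iff (α := fun _ => G)).2 ⟨by simp, ?_⟩ |>.symm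
    ext i
    simp only [hrest, Fin.removeNth]
    split_ifs <;> simp
  have hB : (fun i : Fin (m + 1) => if i.val < j.val + 1 then π v else v)
      = j.insertNth (π v) rest := by
    refine (Fin.insertNth_eq_iff (α := fun _ => G)).2 ⟨by simp, ?_⟩ |>.symm
    ext i
    simp only [hrest, Fin.removeNth]
    have hne : (j.succAbove i).val ≠ j.val := fun h => Fin.succAbove_ne j i (Fin.ext h)
    split_ifs <;> first | rfl | omega
  have hC : T j - T (j + 1) = p.curryMid j (v - π v) rest := by
    simp only [hT]
    rw [map_sub, sub_apply, ContinuousMultilinearMap.curryMid_apply,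
      ContinuousMultilinearMap.curryMid_apply, ← hA, ← hB]
  rw [hC, hπ, map_smul, smul_apply, smul_eq_mul]

/-- Hadamard division in the analytic category: `f` differs from its restriction to the
hyperplane `c = 0` by an analytic multiple of `c`. -/
lemma analytic_division {G : Type*} [NormedAddCommGroup G] [NormedSpace ℝ G]
    (c : G →L[ℝ] ℝ) (e : G) {f : G → ℝ} (hf : AnalyticAt ℝ f 0) :
    ∃ g : G → ℝ, AnalyticAt ℝ g 0 ∧ ∀ᶠ v in 𝓝 0, f v = f (v - c v • e) + c v * g v := by
  obtain ⟨p, r, hp⟩ := hf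
  set π : G →L[ℝ] G := ContinuousLinearMap.id ℝ G - c.smulRight e with hπdef
  have hπ : ∀ v, π v = v - c v • e := fun v => by simp [hπdef]
  set q : FormalMultilinearSeries ℝ G ℝ := fun m => ∑ j : Fin (m + 1),
    ((p (m + 1)).curryMid j e).compContinuousLinearMap
      (fun i => if (j.succAbove i).val < j.val then π else ContinuousLinearMap.id ℝ G) with hq
  obtain ⟨C, a, hC, ha, hpb⟩ := p.le_mul_pow_of_radius_pos (hp.r_pos.trans_le hp.r_le)
  set K : ℝ := max 1 ‖π‖ with hK
  have hK1 : 1 ≤ K := le_max_left _ _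
  have hK0 : 0 < K := by linarith
  have hqb : ∀ m, ‖q m‖ ≤ (C * a * ‖e‖) * (2 * K * a) ^ m := by
    intro m
    have h1 : ∀ j : Fin (m + 1), ‖((p (m + 1)).curryMid j e).compContinuousLinearMap
      (fun i => if (j.succAbove i).val < j.val then π else ContinuousLinearMap.id ℝ G)‖
        ≤ (C * a ^ (m + 1) * ‖e‖) * K ^ m := by
      intro j
      refine (ContinuousMultilinearMap.norm_compContinuousLinearMap_le _ _).trans ?_
      refine mul_le_mul ?_ ?_ (Finset.prod_nonneg fun _ _ => norm_nonneg _) (by positivity)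
      · refine (((p (m + 1)).curryMid j).le_opNorm e).trans ?_
        rw [ContinuousMultilinearMap.norm_curryMid]
        exact mul_le_mul_of_nonneg_right (hpb _) (norm_nonneg _)
      · refine (Finset.prod_le_prod (fun _ _ => norm_nonneg _) (g := fun _ => K) ?_).trans ?_
        · intro i _
          split_ifs
          · exact le_max_right _ _
          · exact ContinuousLinearMap.norm_id_le.trans hK1
        · simp
    refine (norm_sum_le _ _).trans ((Finset.sum_le_sum fun j _ => h1 j).trans ?_)
    have h2 : ((m : ℝ) + 1) ≤ 2 ^ m := by
      exact_mod_cast Nat.succ_le_of_lt (Nat.lt_two_pow_self (n := m))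
    simp only [Finset.sum_const, Finset.card_univ, Fintype.card_fin, nsmul_eq_mul]
    push_cast
    calc ((m : ℝ) + 1) * (C * a ^ (m + 1) * ‖e‖ * K ^ m)
        ≤ 2 ^ m * (C * a ^ (m + 1) * ‖e‖ * K ^ m) := by gcongr
      _ = _ := by ring
  have hqr : 0 < q.radius := by
    set ρ : NNReal := ⟨(2 * K * a)⁻¹, by positivity⟩ with hρ
    have : (ρ : ENNReal) ≤ q.radius := by
      refine q.le_radius_of_bound (C * a * ‖e‖) fun m => ?_
      have hb : (0 : ℝ) < 2 * K * a := by positivity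
      calc ‖q m‖ * (ρ : ℝ) ^ m ≤ (C * a * ‖e‖) * (2 * K * a) ^ m * ((2 * K * a)⁻¹) ^ m := by
            gcongr
            · exact hqb m
            · exact le_rfl
        _ = C * a * ‖e‖ := by
            rw [mul_assoc, ← mul_pow, mul_inv_cancel₀ hb.ne', one_pow, mul_one]
    refine lt_of_lt_of_le ?_ this
    have : 0 < ρ := by
      rw [← NNReal.coe_pos]
      change 0 < (2 * K * a)⁻¹
      positivity
    exact_mod_cast this
  have hqs := q.hasFPowerSeriesOnBall hqr
  refine ⟨q.sum, hqs.analyticAt, ?_⟩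
  have e1 : ∀ᶠ v in 𝓝 (0 : G), v ∈ Metric.eball (0 : G) r :=
    Metric.eball_mem_nhds _ hp.r_pos
  have e2 : ∀ᶠ v in 𝓝 (0 : G), π v ∈ Metric.eball (0 : G) r := by
    have : Tendsto π (𝓝 0) (𝓝 0) := by simpa using π.continuous.tendsto 0
    exact this.eventually (Metric.eball_mem_nhds _ hp.r_pos)
  have e3 : ∀ᶠ v in 𝓝 (0 : G), v ∈ Metric.eball (0 : G) q.radius :=
    Metric.eball_mem_nhds _ hqr
  filter_upwards [e1, e2, e3] with v h1 h2 h3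
  have s1 := hp.hasSum h1
  have s2 := hp.hasSum h2
  have s3 := (hqs.hasSum h3).mul_left (c v)
  rw [zero_add] at s1 s2 s3
  have s4 := s1.sub s2
  rw [← hasSum_nat_add_iff' 1] at s4
  have hz : ((p 0) fun _ => v) - ((p 0) fun _ => π v) = 0 := by
    rw [sub_eq_zero]
    congr 1
    ext i
    exact i.elim0
  rw [Finset.sum_range_one, hz, sub_zero] at s4
  have hterm : (fun n => ((p (n + 1)) fun _ => v) - ((p (n + 1)) fun _ => π v))
      = fun n => c v * (q n) fun _ => v := by
    ext m
    rw [multilinear_telescope c e π (fun v => by rw [hπ]; abel) m (p (m + 1)) v, hq]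
    simp only [sum_apply,
      ContinuousMultilinearMap.compContinuousLinearMap_apply]
  rw [hterm] at s4
  have := s4.unique s3
  rw [hπ] at this
  linarith

/-! ### Normal crossing germs -/

/-- The ring of germs of analytic functions at a point is a domain. -/
lemma germ_mul_eq_zero {E : Type*} [NormedAddCommGroup E] [NormedSpace ℝ E]
    {f g : E → ℝ} (hf : AnalyticAt ℝ f 0) (hg : AnalyticAt ℝ g 0)
    (h : ∀ᶠ x in 𝓝 (0 : E), f x * g x = 0) :
    (∀ᶠ x in 𝓝 (0 : E), f x = 0) ∨ (∀ᶠ x in 𝓝 (0 : E), g x = 0) := by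
  have := (hf.eventually_analyticAt.and hg.eventually_analyticAt).and h
  obtain ⟨r, hr, hB⟩ := Metric.eventually_nhds_iff_ball.1 this
  by_cases hx : ∃ x ∈ Metric.ball (0 : E) r, f x ≠ 0
  · right
    obtain ⟨x, hxr, hfx⟩ := hx
    have hgz : g =ᶠ[𝓝 x] 0 := by
      filter_upwards [(hB x hxr).1.1.continuousAt.eventually_ne hfx,
        Metric.isOpen_ball.mem_nhds hxr] with z h1 h2
      exact (mul_eq_zero.1 (hB z h2).2).resolve_left h1
    have hgB : AnalyticOnNhd ℝ g (Metric.ball (0 : E) r) := fun z hz => (hB z hz).1.2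
    have := hgB.eqOn_zero_of_preconnected_of_eventuallyEq_zero
      (convex_ball (0 : E) r).isPreconnected hxr hgz
    filter_upwards [Metric.ball_mem_nhds (0 : E) hr] with z hz
    exact this hz
  · left
    push Not at hx
    filter_upwards [Metric.ball_mem_nhds (0 : E) hr] with z hz
    exact hx z hz

/-- `g` is a normal crossing germ at `0` with respect to the functions `c k`: an analytic unit
times a monomial in the `c k`. -/
def NC {E κ : Type*} [NormedAddCommGroup E] [NormedSpace ℝ E] [Fintype κ]
    (c : κ → E → ℝ) (g : E → ℝ) : Prop :=
  ∃ (α : κ → ℕ) (u : E → ℝ), AnalyticAt ℝ u 0 ∧ u 0 ≠ 0 ∧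
    ∀ᶠ w in 𝓝 (0 : E), g w = u w * ∏ k, c k w ^ α k

/-- The standard coordinate functions on `ℝⁿ`. -/
abbrev coords (n : ℕ) : Fin n → (Fin n → ℝ) → ℝ := fun k w => w k

section NCbasic
variable {E E' κ κ' : Type*} [NormedAddCommGroup E] [NormedSpace ℝ E] [Fintype κ]
  [NormedAddCommGroup E'] [NormedSpace ℝ E'] [Fintype κ']
  {c : κ → E → ℝ} {c' : κ' → E' → ℝ}

lemma NC.congr {g h : E → ℝ} (hg : NC c g) (e : ∀ᶠ w in 𝓝 (0 : E), h w = g w) : NC c h := by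
  obtain ⟨α, u, hu, hu0, he⟩ := hg
  exact ⟨α, u, hu, hu0, by filter_upwards [e, he] with w h1 h2; rw [h1, h2]⟩

lemma NC.unit {u : E → ℝ} (hu : AnalyticAt ℝ u 0) (hu0 : u 0 ≠ 0) : NC c u :=
  ⟨0, u, hu, hu0, by simp⟩

lemma NC.one : NC c (fun _ => (1 : ℝ)) := NC.unit analyticAt_const one_ne_zero

lemma NC.coord [DecidableEq κ] (k : κ) : NC c (c k) := by
  refine ⟨Pi.single k 1, fun _ => 1, analyticAt_const, one_ne_zero, Eventually.of_forall ?_⟩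
  intro w
  rw [Finset.prod_eq_single k] <;> simp +contextual

lemma NC.mul {g h : E → ℝ} (hg : NC c g) (hh : NC c h) : NC c (fun w => g w * h w) := by
  obtain ⟨α, u, hu, hu0, he⟩ := hg
  obtain ⟨β, v, hv, hv0, he'⟩ := hh
  refine ⟨α + β, fun w => u w * v w, hu.mul hv, mul_ne_zero hu0 hv0, ?_⟩
  filter_upwards [he, he'] with w h1 h2
  simp only [h1, h2, Pi.add_apply, pow_add, Finset.prod_mul_distrib]
  ring

lemma NC.pow {g : E → ℝ} (hg : NC c g) (m : ℕ) : NC c (fun w => g w ^ m) := by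
  induction m with
  | zero => simpa using NC.one
  | succ m ih => simpa [pow_succ] using ih.mul hg

lemma NC.prod {ι : Type*} (s : Finset ι) {g : ι → E → ℝ} (hg : ∀ i ∈ s, NC c (g i)) :
    NC c (fun w => ∏ i ∈ s, g i w) := by
  classical
  induction s using Finset.induction_on with
  | empty => simpa using NC.one
  | insert a s ha ih =>
    simp only [Finset.prod_insert ha]
    exact (hg a (by simp)).mul (ih fun i hi => hg i (by simp [hi]))

/-- Normal crossings are stable under maps whose components are themselves normal crossings. -/
lemma NC.comp {g : E → ℝ} {φ : E' → E} (hg : NC c g) (hφ : AnalyticAt ℝ φ 0) (h0 : φ 0 = 0)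
    (hc : ∀ k, NC c' (fun w => c k (φ w))) : NC c' (fun w => g (φ w)) := by
  obtain ⟨α, u, hu, hu0, he⟩ := hg
  have ht : Tendsto φ (𝓝 0) (𝓝 0) := by simpa [h0] using hφ.continuousAt.tendsto
  have h1 : NC c' (fun w => u (φ w) * ∏ k, c k (φ w) ^ α k) := by
    refine NC.mul (NC.unit (AnalyticAt.fun_comp (by rwa [h0]) hφ) (by rwa [h0])) ?_
    exact NC.prod _ fun k _ => (hc k).pow _
  exact h1.congr (ht.eventually he)

end NCbasic

lemma analyticAt_coord {n : ℕ} (k : Fin n) (x : Fin n → ℝ) :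
    AnalyticAt ℝ (fun w : Fin n → ℝ => w k) x :=
  (ContinuousLinearMap.proj (R := ℝ) (φ := fun _ : Fin n => ℝ) k).analyticAt x

lemma analyticAt_monomial {n : ℕ} (α : Fin n → ℕ) (x : Fin n → ℝ) :
    AnalyticAt ℝ (fun w : Fin n → ℝ => ∏ k, w k ^ α k) x :=
  Finset.analyticAt_fun_prod _ fun k _ => (analyticAt_coord k x).pow _

lemma coord_not_eventually_zero {n : ℕ} (k : Fin n) :
    ¬ ∀ᶠ w in 𝓝 (0 : Fin n → ℝ), w k = 0 := by
  intro h
  have ht : Tendsto (fun t : ℝ => t • (Pi.single k 1 : Fin n → ℝ)) (𝓝 0) (𝓝 0) := by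
    have : Continuous (fun t : ℝ => t • (Pi.single k 1 : Fin n → ℝ)) := by fun_prop
    simpa using this.tendsto 0
  have h2 := ht.eventually h
  obtain ⟨r, hr, hB⟩ := Metric.eventually_nhds_iff_ball.1 h2
  have := hB (r / 2) (by simp [abs_of_pos hr, hr])
  simp at this
  exact hr.ne' this

/-- A divisor `g` of a normal crossing germ is a normal crossing germ, by induction on the degree of
the monomial: a coordinate occurring in it divides `g` or the cofactor, germs restricted to a
coordinate hyperplane forming a domain. -/
lemma NC.of_mul {n : ℕ} {u : (Fin n → ℝ) → ℝ} (hu0 : u 0 ≠ 0) (hu : AnalyticAt ℝ u 0) (N : ℕ) :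
    ∀ (α : Fin n → ℕ) (_ : ∑ k, α k = N) (g h : (Fin n → ℝ) → ℝ) (_ : AnalyticAt ℝ g 0)
      (_ : AnalyticAt ℝ h 0)
      (_ : ∀ᶠ w in 𝓝 (0 : Fin n → ℝ), g w * h w = u w * ∏ k, w k ^ α k), NC (coords n) g := by
  induction N with
  | zero =>
    intro α hα g h hg hh he
    refine NC.unit hg ?_
    have := he.self_of_nhds
    have h0 : ∀ k, α k = 0 := fun k => by
      simpa using (Finset.sum_eq_zero_iff.1 hα) k (Finset.mem_univ k)
    simp only [h0, pow_zero, Finset.prod_const_one, mul_one] at this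
    intro hg0
    rw [hg0, zero_mul] at this
    exact hu0 this.symm
  | succ N ih =>
    intro α hα g h hg hh he
    obtain ⟨k, hk⟩ : ∃ k, α k ≠ 0 := by
      by_contra! hcon
      simp [hcon] at hα
    obtain ⟨a, ha⟩ : ∃ a, α k = a + 1 := Nat.exists_eq_succ_of_ne_zero hk
    set α' := Function.update α k a with hα'
    have hsum : ∑ j, α' j = N := by
      have h1 := Finset.sum_update_of_mem (Finset.mem_univ k) α a
      have h2 := Finset.add_sum_erase Finset.univ α (Finset.mem_univ k)
      rw [Finset.sdiff_singleton_eq_erase] at h1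
      rw [hα', h1]
      omega
    have hprod : ∀ w : Fin n → ℝ, ∏ j, w j ^ α j = w k * ∏ j, w j ^ α' j := by
      intro w
      rw [← Finset.mul_prod_erase Finset.univ _ (Finset.mem_univ k),
        ← Finset.mul_prod_erase Finset.univ (fun j => w j ^ α' j) (Finset.mem_univ k), ← mul_assoc]
      congr 1
      · simp [hα', ha, pow_succ']
      · refine Finset.prod_congr rfl fun j hj => ?_
        rw [hα', Function.update_of_ne (Finset.ne_of_mem_erase hj)]
    set c : (Fin n → ℝ) →L[ℝ] ℝ := ContinuousLinearMap.proj k with hc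
    set e : Fin n → ℝ := Pi.single k 1 with hedef
    set P : (Fin n → ℝ) →L[ℝ] (Fin n → ℝ) := ContinuousLinearMap.id ℝ _ - c.smulRight e with hP
    have hPw : ∀ w, P w = w - c w • e := fun w => by simp [hP]
    have hPk : ∀ w, P w k = 0 := fun w => by simp [hPw, hc, hedef]
    have hPt : Tendsto P (𝓝 0) (𝓝 0) := by simpa using P.continuous.tendsto 0
    have hPa : AnalyticAt ℝ P 0 := P.analyticAt 0
    have hcases := germ_mul_eq_zero (f := fun w => g (P w)) (g := fun w => h (P w))
      (AnalyticAt.fun_comp (by simpa using hg) hPa) (AnalyticAt.fun_comp (by simpa using hh) hPa) (by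
        filter_upwards [hPt.eventually he] with w hw
        rw [hw, hprod, hPk]; simp)
    -- cancelling the coordinate `w k` from an identity of analytic germs
    have cancel : ∀ A : (Fin n → ℝ) → ℝ, AnalyticAt ℝ A 0 →
        (∀ᶠ w in 𝓝 (0 : Fin n → ℝ), w k * A w = w k * (u w * ∏ j, w j ^ α' j)) →
        ∀ᶠ w in 𝓝 (0 : Fin n → ℝ), A w = u w * ∏ j, w j ^ α' j := by
      intro A hA hA'
      have := germ_mul_eq_zero (analyticAt_coord k 0)
        (hA.sub (hu.mul (analyticAt_monomial α' 0))) (by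
          filter_upwards [hA'] with w hw
          simp only [Pi.sub_apply, Pi.mul_apply, mul_sub, hw, sub_self])
      rcases this with h1 | h1
      · exact absurd h1 (coord_not_eventually_zero k)
      · filter_upwards [h1] with w hw
        simpa [sub_eq_zero] using hw
    rcases hcases with h1 | h1
    · obtain ⟨g1, hg1, hg1e⟩ := analytic_division c e hg
      have hgk : ∀ᶠ w in 𝓝 (0 : Fin n → ℝ), g w = w k * g1 w := by
        filter_upwards [h1, hg1e] with w h1 h2
        rw [h2, ← hPw, h1, zero_add]; rfl
      have := ih α' hsum g1 h hg1 hh (cancel _ (hg1.mul hh) (by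
        filter_upwards [hgk, he] with w h1 h2
        rw [h1, hprod] at h2
        linear_combination h2))
      exact ((NC.coord k).mul this).congr hgk
    · obtain ⟨h1', hh1, hh1e⟩ := analytic_division c e hh
      have hhk : ∀ᶠ w in 𝓝 (0 : Fin n → ℝ), h w = w k * h1' w := by
        filter_upwards [h1, hh1e] with w h1 h2
        rw [h2, ← hPw, h1, zero_add]; rfl
      exact ih α' hsum g h1' hg hh1 (cancel _ (hg.mul hh1) (by
        filter_upwards [hhk, he] with w h1 h2
        rw [h1, hprod] at h2
        linear_combination h2))

lemma NC.left_of_mul {n : ℕ} {g h : (Fin n → ℝ) → ℝ} (hg : AnalyticAt ℝ g 0)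
    (hh : AnalyticAt ℝ h 0) (H : NC (coords n) (fun w => g w * h w)) : NC (coords n) g := by
  obtain ⟨α, u, hu, hu0, he⟩ := H
  exact NC.of_mul hu0 hu _ α rfl g h hg hh he

/-- Leading exponent along a curve: if `S = U t * t ^ A - V t * t ^ B` near
`0` with `A < B`, then `S / t ^ A` tends to the limit of `U`. -/
lemma leading_exponent {U V S : ℝ → ℝ} {U0 V0 : ℝ} {A B : ℕ} (hAB : A < B)
    (hU : Tendsto U (𝓝[>] 0) (𝓝 U0)) (hV : Tendsto V (𝓝[>] 0) (𝓝 V0))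
    (hS : ∀ᶠ t in 𝓝[>] (0 : ℝ), U t * t ^ A - V t * t ^ B = S t) :
    Tendsto (fun t => S t / t ^ A) (𝓝[>] 0) (𝓝 U0) := by
  have ht : Tendsto (fun t : ℝ => t ^ (B - A)) (𝓝[>] 0) (𝓝 0) := by
    have : Tendsto (fun t : ℝ => t ^ (B - A)) (𝓝 0) (𝓝 (0 ^ (B - A))) :=
      (continuous_pow _).tendsto 0
    rw [zero_pow (by omega)] at this
    exact this.mono_left nhdsWithin_le_nhds
  have h1 := hU.sub (hV.mul ht)
  rw [mul_zero, sub_zero] at h1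
  refine h1.congr' ?_
  filter_upwards [hS, self_mem_nhdsWithin] with t h2 h3
  have h3 : (0 : ℝ) < t := h3
  rw [← h2, eq_div_iff (by positivity)]
  have : t ^ B = t ^ (B - A) * t ^ A := by rw [← pow_add]; congr 1; omega
  rw [this]; ring

lemma exponent_unique {S : ℝ → ℝ} {a b : ℝ} {A D : ℕ} (ha : a ≠ 0) (hb : b ≠ 0)
    (h1 : Tendsto (fun t => S t / t ^ A) (𝓝[>] 0) (𝓝 a))
    (h2 : Tendsto (fun t => S t / t ^ D) (𝓝[>] 0) (𝓝 b)) : D = A := by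
  have key : ∀ {a b : ℝ} {A D : ℕ}, Tendsto (fun t => S t / t ^ A) (𝓝[>] 0) (𝓝 a) →
      Tendsto (fun t => S t / t ^ D) (𝓝[>] 0) (𝓝 b) → b ≠ 0 → ¬ D < A := by
    intro a b A D h1 h2 hb hlt
    have ht : Tendsto (fun t : ℝ => t ^ (A - D)) (𝓝[>] 0) (𝓝 0) := by
      have : Tendsto (fun t : ℝ => t ^ (A - D)) (𝓝 0) (𝓝 (0 ^ (A - D))) :=
        (continuous_pow _).tendsto 0
      rw [zero_pow (by omega)] at this
      exact this.mono_left nhdsWithin_le_nhds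
    have h3 := h1.mul ht
    rw [mul_zero] at h3
    have h4 : Tendsto (fun t => S t / t ^ D) (𝓝[>] 0) (𝓝 0) := by
      refine h3.congr' ?_
      filter_upwards [self_mem_nhdsWithin] with t h5
      have h5 : (0 : ℝ) < t := h5
      have : t ^ A = t ^ (A - D) * t ^ D := by rw [← pow_add]; congr 1; omega
      rw [this]
      field_simp
    exact hb (tendsto_nhds_unique h2 h4)
  exact le_antisymm (not_lt.1 (key h2 h1 ha)) (not_lt.1 (key h1 h2 hb))

/-- If two normal crossing germs have a difference that vanishes or has normal crossings, then one
of the two monomials divides the other.  Restricting to the curves `w j = t ^ a j` shows that the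
exponent of the difference would otherwise have to agree with both exponents. -/
lemma monomials_comparable {n : ℕ} {g h : (Fin n → ℝ) → ℝ} {u v : (Fin n → ℝ) → ℝ}
    {α β : Fin n → ℕ} (hu : AnalyticAt ℝ u 0) (hu0 : u 0 ≠ 0) (hv : AnalyticAt ℝ v 0)
    (hv0 : v 0 ≠ 0) (hg : ∀ᶠ w in 𝓝 (0 : Fin n → ℝ), g w = u w * ∏ k, w k ^ α k)
    (hh : ∀ᶠ w in 𝓝 (0 : Fin n → ℝ), h w = v w * ∏ k, w k ^ β k)
    (hd : NC (coords n) (fun w => g w - h w) ∨ ∀ᶠ w in 𝓝 (0 : Fin n → ℝ), g w - h w = 0) :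
    α ≤ β ∨ β ≤ α := by
  -- the curve with weights `a`
  have hcurve : ∀ a : Fin n → ℕ, (∀ j, a j ≠ 0) →
      Tendsto (fun (t : ℝ) (j : Fin n) => t ^ a j) (𝓝[>] 0) (𝓝 0) := by
    intro a ha
    have : Tendsto (fun (t : ℝ) (j : Fin n) => t ^ a j) (𝓝 0) (𝓝 (fun j => 0 ^ a j)) := by
      have : Continuous (fun (t : ℝ) (j : Fin n) => t ^ a j) := by fun_prop
      exact this.tendsto 0
    have h0 : (fun j => (0 : ℝ) ^ a j) = 0 := by ext j; simp [ha j]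
    rw [h0] at this
    exact this.mono_left nhdsWithin_le_nhds
  have hmon : ∀ (a γ : Fin n → ℕ) (t : ℝ), ∏ j, (t ^ a j) ^ γ j = t ^ ∑ j, a j * γ j := by
    intro a γ t
    simp only [← pow_mul, Finset.prod_pow_eq_pow_sum]
  -- the exponent of the difference along a curve separating the two monomials
  have main : ∀ (g h u v : (Fin n → ℝ) → ℝ) (α β : Fin n → ℕ), AnalyticAt ℝ u 0 → u 0 ≠ 0 →
      AnalyticAt ℝ v 0 → (∀ᶠ w in 𝓝 (0 : Fin n → ℝ), g w = u w * ∏ k, w k ^ α k) →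
      (∀ᶠ w in 𝓝 (0 : Fin n → ℝ), h w = v w * ∏ k, w k ^ β k) →
      ∀ a : Fin n → ℕ, (∀ j, a j ≠ 0) → ∑ j, a j * α j < ∑ j, a j * β j →
      (¬ ∀ᶠ w in 𝓝 (0 : Fin n → ℝ), g w - h w = 0) ∧
      ∀ (δ : Fin n → ℕ) (s : (Fin n → ℝ) → ℝ), AnalyticAt ℝ s 0 → s 0 ≠ 0 →
        (∀ᶠ w in 𝓝 (0 : Fin n → ℝ), g w - h w = s w * ∏ k, w k ^ δ k) →
        ∑ j, a j * δ j = ∑ j, a j * α j := by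
    intro g h u v α β hu hu0 hv hg hh a ha hlt
    set x : ℝ → Fin n → ℝ := fun t j => t ^ a j with hx
    have hxt := hcurve a ha
    have L := leading_exponent (U := fun t => u (x t)) (V := fun t => v (x t))
      (S := fun t => g (x t) - h (x t)) hlt (hu.continuousAt.tendsto.comp hxt)
      (hv.continuousAt.tendsto.comp hxt) (by
        filter_upwards [hxt.eventually hg, hxt.eventually hh] with t h1 h2
        rw [h1, h2, hmon, hmon])
    refine ⟨fun hz => ?_, fun δ s hs hs0 hse => ?_⟩
    · have : Tendsto (fun t => (g (x t) - h (x t)) / t ^ ∑ j, a j * α j) (𝓝[>] 0) (𝓝 0) := by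
        refine tendsto_const_nhds.congr' ?_
        filter_upwards [hxt.eventually hz] with t h1
        rw [h1, zero_div]
      exact hu0 (tendsto_nhds_unique L this)
    · refine exponent_unique (S := fun t => g (x t) - h (x t)) hu0 hs0 L ?_
      refine (hs.continuousAt.tendsto.comp hxt).congr' ?_
      filter_upwards [hxt.eventually hse, self_mem_nhdsWithin] with t h1 h2
      have h2 : (0 : ℝ) < t := h2
      rw [h1, hmon]
      simp only [Function.comp_apply]
      field_simp
  -- weights concentrated enough on a coordinate `l` with `α l < β l`
  have weights : ∀ (α β : Fin n → ℕ) (l : Fin n), α l < β l →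
      ∃ a : Fin n → ℕ, (∀ j, a j ≠ 0) ∧ ∑ j, a j * α j < ∑ j, a j * β j ∧
        ∀ k, ∑ j, (a + (Pi.single k 1 : Fin n → ℕ)) j * α j < ∑ j, (a + (Pi.single k 1 : Fin n → ℕ)) j * β j := by
    intro α β l hl
    set N := 2 * ∑ j, α j + 1 with hN
    have e1 : ∀ γ : Fin n → ℕ, ∑ j, ((1 : Fin n → ℕ) + (Pi.single l N : Fin n → ℕ)) j * γ j
        = ∑ j, γ j + N * γ l := by
      intro γ
      simp only [Pi.add_apply, Pi.one_apply, add_mul, one_mul, Finset.sum_add_distrib]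
      congr 1
      rw [Finset.sum_eq_single l] <;> simp +contextual
    have e2 : ∀ (γ : Fin n → ℕ) (k : Fin n),
        ∑ j, ((1 : Fin n → ℕ) + (Pi.single l N : Fin n → ℕ) + (Pi.single k 1 : Fin n → ℕ)) j * γ j
        = ∑ j, γ j + N * γ l + γ k := by
      intro γ k
      rw [← e1]
      simp only [Pi.add_apply, Pi.one_apply, add_mul, one_mul, Finset.sum_add_distrib]
      congr 1
      rw [Finset.sum_eq_single k] <;> simp +contextual
    have h3 : N * α l + N ≤ N * β l := by
      calc N * α l + N = N * (α l + 1) := by ring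
        _ ≤ N * β l := Nat.mul_le_mul_left _ hl
    refine ⟨1 + (Pi.single l N : Fin n → ℕ), fun j => by simp, ?_, fun k => ?_⟩
    · rw [e1, e1]; omega
    · rw [e2, e2]
      have : α k ≤ ∑ j, α j := Finset.single_le_sum (fun _ _ => Nat.zero_le _) (Finset.mem_univ k)
      omega
  have same : ∀ (g h u v : (Fin n → ℝ) → ℝ) (α β : Fin n → ℕ), AnalyticAt ℝ u 0 → u 0 ≠ 0 →
      AnalyticAt ℝ v 0 → (∀ᶠ w in 𝓝 (0 : Fin n → ℝ), g w = u w * ∏ k, w k ^ α k) →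
      (∀ᶠ w in 𝓝 (0 : Fin n → ℝ), h w = v w * ∏ k, w k ^ β k) → ∀ l, α l < β l →
      (¬ ∀ᶠ w in 𝓝 (0 : Fin n → ℝ), g w - h w = 0) ∧
      ∀ (δ : Fin n → ℕ) (s : (Fin n → ℝ) → ℝ), AnalyticAt ℝ s 0 → s 0 ≠ 0 →
        (∀ᶠ w in 𝓝 (0 : Fin n → ℝ), g w - h w = s w * ∏ k, w k ^ δ k) → δ = α := by
    intro g h u v α β hu hu0 hv hg hh l hl
    obtain ⟨a, ha, h1, h2⟩ := weights α β l hl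
    have M := main g h u v α β hu hu0 hv hg hh
    refine ⟨(M a ha h1).1, fun δ s hs hs0 hse => ?_⟩
    ext k
    have q1 := (M a ha h1).2 δ s hs hs0 hse
    have q2 := (M _ (fun j => by simp [ha j]) (h2 k)).2 δ s hs hs0 hse
    have e2 : ∀ γ : Fin n → ℕ, ∑ j, (a + (Pi.single k 1 : Fin n → ℕ)) j * γ j = ∑ j, a j * γ j + γ k := by
      intro γ
      simp only [Pi.add_apply, add_mul, Finset.sum_add_distrib]
      congr 1
      rw [Finset.sum_eq_single k] <;> simp +contextual
    rw [e2, e2] at q2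
    omega
  by_contra! hcon
  obtain ⟨hc1, hc2⟩ := hcon
  obtain ⟨l, hl⟩ : ∃ l, β l < α l := by
    by_contra! hc; exact hc1 hc
  obtain ⟨k, hk⟩ : ∃ k, α k < β k := by
    by_contra! hc; exact hc2 hc
  have S1 := same g h u v α β hu hu0 hv hg hh k hk
  have S2 := same h g v u β α hv hv0 hu hh hg l hl
  rcases hd with ⟨δ, s, hs, hs0, hse⟩ | hz
  · have d1 := S1.2 δ s hs hs0 hse
    have d2 := S2.2 δ (fun w => - s w) hs.neg (neg_ne_zero.2 hs0) (by
      filter_upwards [hse] with w hw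
      linear_combination -hw)
    rw [d1] at d2
    rw [d2] at hk
    exact lt_irrefl _ hk
  · exact S1.1 hz

/-! ### Charts, local uniformization and toric blow-ups -/

/-- `φ` is an analytic chart through which the family `X` of points tending to `0` along `l` lifts
to the family `W`, which again tends to `0`. -/
structure Lift {ι E F : Type*} [NormedAddCommGroup E] [NormedSpace ℝ E] [NormedAddCommGroup F]
    [NormedSpace ℝ F] (l : Ultrafilter ι) (X : ι → F) (φ : E → F) (W : ι → E) : Prop where
  analytic : AnalyticAt ℝ φ 0
  map_zero : φ 0 = 0
  tendsto : Tendsto W l (𝓝 0)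
  eq : ∀ᶠ i in (l : Filter ι), φ (W i) = X i

section Lift
variable {ι E F G : Type*} [NormedAddCommGroup E] [NormedSpace ℝ E] [NormedAddCommGroup F]
    [NormedSpace ℝ F] [NormedAddCommGroup G] [NormedSpace ℝ G] {l : Ultrafilter ι}

lemma Lift.tendsto_map {X : ι → F} {φ : E → F} {W : ι → E} (h : Lift l X φ W) :
    Tendsto φ (𝓝 0) (𝓝 0) := by
  simpa [h.map_zero] using h.analytic.continuousAt.tendsto

lemma Lift.comp {X : ι → F} {φ : E → F} {W : ι → E} {ψ : G → E} {V : ι → G}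
    (h : Lift l X φ W) (h' : Lift l W ψ V) : Lift l X (fun v => φ (ψ v)) V where
  analytic := AnalyticAt.fun_comp (by rw [h'.map_zero]; exact h.analytic) h'.analytic
  map_zero := by rw [h'.map_zero, h.map_zero]
  tendsto := h'.tendsto
  eq := by filter_upwards [h.eq, h'.eq] with i h1 h2; rw [h2, h1]

lemma Lift.prod {X : ι → F} {φ : E → F} {W : ι → E} (h : Lift l X φ W) {Z : ι → ℝ}
    (hZ : Tendsto Z l (𝓝 0)) :
    Lift l (fun i => (X i, Z i)) (fun p : E × ℝ => (φ p.1, p.2)) (fun i => (W i, Z i)) where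
  analytic := (AnalyticAt.fun_comp (g := φ) (f := Prod.fst) h.analytic analyticAt_fst).prod
    analyticAt_snd
  map_zero := by simp [h.map_zero]
  tendsto := h.tendsto.prodMk_nhds hZ
  eq := by filter_upwards [h.eq] with i h1; simp [h1]

lemma Lift.analyticAt_comp {X : ι → F} {φ : E → F} {W : ι → E} (h : Lift l X φ W) {f : F → ℝ}
    (hf : AnalyticAt ℝ f 0) : AnalyticAt ℝ (fun w => f (φ w)) 0 :=
  AnalyticAt.fun_comp (by rw [h.map_zero]; exact hf) h.analytic

end Lift

/-- A germ that has normal crossings or vanishes identically. -/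
def NCZ {E κ : Type*} [NormedAddCommGroup E] [NormedSpace ℝ E] [Fintype κ]
    (c : κ → E → ℝ) (g : E → ℝ) : Prop := NC c g ∨ ∀ᶠ w in 𝓝 (0 : E), g w = 0

/-- Local uniformization in `n` variables along the ultrafilter `l`: any analytic germ becomes a
normal crossing germ (or zero) in a suitable chart through which the given family of points
lifts. -/
def LU {ι : Type*} (l : Ultrafilter ι) (n : ℕ) : Prop :=
  ∀ (X : ι → Fin n → ℝ) (f : (Fin n → ℝ) → ℝ), Tendsto X l (𝓝 0) → AnalyticAt ℝ f 0 →
    ∃ (φ : (Fin n → ℝ) → Fin n → ℝ) (W : ι → Fin n → ℝ),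
      Lift l X φ W ∧ NCZ (coords n) (fun w => f (φ w))

lemma germ_prod_eq_zero {E J : Type*} [NormedAddCommGroup E] [NormedSpace ℝ E] (S : Finset J)
    {h : J → E → ℝ} (hh : ∀ j ∈ S, AnalyticAt ℝ (h j) 0)
    (hz : ∀ᶠ x in 𝓝 (0 : E), ∏ j ∈ S, h j x = 0) :
    ∃ j ∈ S, ∀ᶠ x in 𝓝 (0 : E), h j x = 0 := by
  classical
  induction S using Finset.induction_on with
  | empty => simpa using hz.self_of_nhds
  | insert a s ha ih =>
    simp only [Finset.prod_insert ha] at hz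
    rcases germ_mul_eq_zero (hh a (by simp))
      (Finset.analyticAt_fun_prod s fun j hj => hh j (by simp [hj])) hz with h1 | h1
    · exact ⟨a, by simp, h1⟩
    · obtain ⟨j, hj, h2⟩ := ih (fun j hj => hh j (by simp [hj])) h1
      exact ⟨j, by simp [hj], h2⟩

/-- Local uniformization of finitely many germs in one chart.  It is applied to the product; if
the product pulls back to zero then one of the factors does, and that factor can be dropped. -/
lemma LU.simultaneous {ι : Type*} {l : Ultrafilter ι} {n : ℕ} (hLU : LU l n) {J : Type*} (m : ℕ) :
    ∀ (S : Finset J) (_ : S.card = m) (X : ι → Fin n → ℝ) (h : J → (Fin n → ℝ) → ℝ)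
      (_ : Tendsto X l (𝓝 0)) (_ : ∀ j ∈ S, AnalyticAt ℝ (h j) 0),
      ∃ (φ : (Fin n → ℝ) → Fin n → ℝ) (W : ι → Fin n → ℝ),
        Lift l X φ W ∧ ∀ j ∈ S, NCZ (coords n) (fun w => h j (φ w)) := by
  classical
  induction m with
  | zero =>
    intro S hS X h hX _
    rw [Finset.card_eq_zero] at hS
    exact ⟨id, X, ⟨analyticAt_id, rfl, hX, Eventually.of_forall fun _ => rfl⟩, by simp [hS]⟩
  | succ m ih =>
    intro S hS X h hX hh
    obtain ⟨φ, W, hL, hN⟩ := hLU X (fun x => ∏ j ∈ S, h j x) hX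
      (Finset.analyticAt_fun_prod S hh)
    have hha : ∀ j ∈ S, AnalyticAt ℝ (fun w => h j (φ w)) 0 :=
      fun j hj => hL.analyticAt_comp (hh j hj)
    rcases hN with hN | hN
    · refine ⟨φ, W, hL, fun j hj => Or.inl ?_⟩
      refine NC.left_of_mul (hha j hj) (h := fun w => ∏ i ∈ S.erase j, h i (φ w))
        (Finset.analyticAt_fun_prod _ fun i hi => hha i (Finset.mem_of_mem_erase hi)) ?_
      exact hN.congr (Eventually.of_forall fun w =>
        Finset.mul_prod_erase S (fun i => h i (φ w)) hj)
    · obtain ⟨j, hj, hz⟩ := germ_prod_eq_zero S hha hN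
      obtain ⟨ψ, V, hL', hN'⟩ := ih (S.erase j) (by rw [Finset.card_erase_of_mem hj, hS]; rfl) W
        (fun j w => h j (φ w)) hL.tendsto (fun i hi => hha i (Finset.mem_of_mem_erase hi))
      refine ⟨_, V, hL.comp hL', fun i hi => ?_⟩
      by_cases hij : i = j
      · subst hij
        exact Or.inr (hL'.tendsto_map.eventually hz)
      · exact hN' i (Finset.mem_erase.2 ⟨hij, hi⟩)

/-- Coordinates on `ℝⁿ × ℝ`, the last variable being listed first. -/
abbrev pcoords (n : ℕ) : Fin (n + 1) → (Fin n → ℝ) × ℝ → ℝ :=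
  fun k p => Fin.cons (α := fun _ => ℝ) p.2 p.1 k

lemma NC.snd {n : ℕ} : NC (pcoords n) (fun p => p.2) := NC.coord (c := pcoords n) 0

lemma NC.fst_apply {n : ℕ} (k : Fin n) : NC (pcoords n) (fun p => p.1 k) :=
  (NC.coord (c := pcoords n) k.succ).congr (by simp)

/-- A normal crossing germ of the first factor is one of the product. -/
lemma NC.fst {n : ℕ} {g : (Fin n → ℝ) → ℝ} (hg : NC (coords n) g) :
    NC (pcoords n) (fun p => g p.1) :=
  NC.comp (φ := Prod.fst) hg analyticAt_fst rfl fun k => NC.fst_apply k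

lemma exists_limit {ι : Type*} (l : Ultrafilter ι) {Z : ι → ℝ} {C : ℝ}
    (h : ∀ᶠ i in (l : Filter ι), |Z i| ≤ C) : ∃ z, Tendsto Z l (𝓝 z) := by
  have hc : IsCompact (Set.Icc (-C) C) := isCompact_Icc
  obtain ⟨z, _, hz⟩ := hc.ultrafilter_le_nhds (l.map Z) (by
    rw [Ultrafilter.coe_map, le_principal_iff, Filter.mem_map]
    filter_upwards [h] with i hi
    exact abs_le.1 hi)
  exact ⟨z, hz⟩

lemma analyticAt_fst_apply {n : ℕ} (k : Fin n) (x : (Fin n → ℝ) × ℝ) :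
    AnalyticAt ℝ (fun p : (Fin n → ℝ) × ℝ => p.1 k) x :=
  AnalyticAt.fun_comp (g := fun w : Fin n → ℝ => w k) (analyticAt_coord k _) analyticAt_fst

/-- Dividing out one factor from a monomial. -/
lemma exists_monomial_factor {n N : ℕ} {γ : Fin n → ℕ} (hγ : ∑ j, γ j = N + 1) :
    ∃ (k : Fin n) (γ' : Fin n → ℕ), ∑ j, γ' j = N ∧
      ∀ w : Fin n → ℝ, ∏ j, w j ^ γ j = w k * ∏ j, w j ^ γ' j := by
  obtain ⟨k, hk⟩ : ∃ k, γ k ≠ 0 := by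
    by_contra! hcon
    simp [hcon] at hγ
  obtain ⟨a, ha⟩ : ∃ a, γ k = a + 1 := Nat.exists_eq_succ_of_ne_zero hk
  refine ⟨k, Function.update γ k a, ?_, fun w => ?_⟩
  · have h1 := Finset.sum_update_of_mem (Finset.mem_univ k) γ a
    have h2 := Finset.add_sum_erase Finset.univ γ (Finset.mem_univ k)
    rw [Finset.sdiff_singleton_eq_erase] at h1
    rw [h1]
    omega
  · rw [← Finset.mul_prod_erase Finset.univ _ (Finset.mem_univ k),
      ← Finset.mul_prod_erase Finset.univ (fun j => w j ^ _) (Finset.mem_univ k), ← mul_assoc]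
    congr 1
    · simp [ha, pow_succ']
    · refine Finset.prod_congr rfl fun j hj => ?_
      rw [Function.update_of_ne (Finset.ne_of_mem_erase hj)]

/-- Toric blow-ups making the last variable divide a monomial that is negligible against it
along `l`. -/
lemma principalize {ι : Type*} (l : Ultrafilter ι) {n : ℕ} (N : ℕ) :
    ∀ (γ : Fin n → ℕ) (_ : ∑ j, γ j = N) (X : ι → Fin n → ℝ) (Z : ι → ℝ)
      (_ : Tendsto X l (𝓝 0)) (_ : Tendsto Z l (𝓝 0)) (_ : ∀ᶠ i in (l : Filter ι), Z i ≠ 0)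
      (_ : Tendsto (fun i => (∏ j, X i j ^ γ j) / Z i) l (𝓝 0)),
      ∃ (φ : (Fin n → ℝ) × ℝ → (Fin n → ℝ) × ℝ) (V : ι → (Fin n → ℝ) × ℝ)
        (q : (Fin n → ℝ) × ℝ → ℝ),
        Lift l (fun i => (X i, Z i)) φ V ∧
        (∀ k, NC (pcoords n) (fun p => pcoords n k (φ p))) ∧ AnalyticAt ℝ q 0 ∧
        ∀ᶠ p in 𝓝 (0 : (Fin n → ℝ) × ℝ), ∏ j, (φ p).1 j ^ γ j = (φ p).2 * q p := by
  induction N with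
  | zero =>
    intro γ hγ X Z hX hZ hZ0 hlim
    exfalso
    have h0 : ∀ k, γ k = 0 := fun k => by
      simpa using (Finset.sum_eq_zero_iff.1 hγ) k (Finset.mem_univ k)
    have h1 := hlim.mul hZ
    have h2 : Tendsto (fun _ : ι => (1 : ℝ)) l (𝓝 (0 * 0)) := by
      refine h1.congr' ?_
      filter_upwards [hZ0] with i hi
      simp [h0, hi]
    have := tendsto_nhds_unique h2 tendsto_const_nhds
    norm_num at this
  | succ N ih =>
    intro γ hγ X Z hX hZ hZ0 hlim
    obtain ⟨k, γ', hsum, hprod⟩ := exists_monomial_factor hγ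
    have hXk : Tendsto (fun i => X i k) l (𝓝 0) := (tendsto_pi_nhds.1 hX) k
    rcases l.em (fun i => |Z i| ≤ |X i k|) with hc | hc
    · have hXk0 : ∀ᶠ i in (l : Filter ι), X i k ≠ 0 := by
        filter_upwards [hc, hZ0] with i h1 h2 h3
        rw [h3, abs_zero] at h1
        exact h2 (abs_nonpos_iff.1 h1)
      obtain ⟨z0, hz0⟩ := exists_limit l (Z := fun i => Z i / X i k) (C := 1) (by
        filter_upwards [hc] with i h1
        rw [abs_div]
        exact div_le_one_of_le₀ h1 (abs_nonneg _))
      -- the chart `(x, z) ↦ (x, x k * (z0 + z))`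
      have hL : Lift l (fun i => (X i, Z i))
          (fun p : (Fin n → ℝ) × ℝ => (p.1, p.1 k * (z0 + p.2)))
          (fun i => (X i, Z i / X i k - z0)) :=
        { analytic := analyticAt_fst.prod
            ((analyticAt_fst_apply k _).mul (analyticAt_const.add analyticAt_snd))
          map_zero := by simp
          tendsto := hX.prodMk_nhds (by simpa using hz0.sub_const z0)
          eq := by
            filter_upwards [hXk0] with i hi
            simp only [add_sub_cancel]
            rw [mul_div_cancel₀ _ hi] }
      by_cases h00 : z0 = 0
      · subst h00
        simp only [zero_add, sub_zero] at hL
        obtain ⟨φ, V, q, hL', hNC, hq, hqe⟩ := ih γ' hsum X (fun i => Z i / X i k) hX hz0 (by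
          filter_upwards [hXk0, hZ0] with i h1 h2
          exact div_ne_zero h2 h1) (by
          refine hlim.congr' ?_
          filter_upwards [hXk0] with i h1
          rw [hprod]
          field_simp)
        refine ⟨_, V, q, hL.comp hL', fun j => ?_, hq, ?_⟩
        · refine Fin.cases ?_ (fun j => ?_) j
          · exact (hNC k.succ).mul (hNC 0)
          · exact hNC j.succ
        · filter_upwards [hqe] with p hp
          rw [hprod, hp, mul_assoc]
      · refine ⟨_, _, fun p => (∏ j, p.1 j ^ γ' j) * (z0 + p.2)⁻¹, hL, fun j => ?_, ?_, ?_⟩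
        · refine Fin.cases ?_ (fun j => ?_) j
          · exact (NC.fst_apply k).mul (NC.unit (analyticAt_const.add analyticAt_snd)
              (by simpa using h00))
          · exact NC.fst_apply j
        · exact (Finset.analyticAt_fun_prod _ fun j _ => (analyticAt_fst_apply j _).pow _).mul
            ((analyticAt_const.add analyticAt_snd).inv (by simpa using h00))
        · have : ∀ᶠ p in 𝓝 (0 : (Fin n → ℝ) × ℝ), z0 + p.2 ≠ 0 := by
            have : ContinuousAt (fun p : (Fin n → ℝ) × ℝ => z0 + p.2) 0 := by fun_prop
            exact this.eventually_ne (by simpa using h00)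
          filter_upwards [this] with p hp
          rw [hprod]
          field_simp
    · obtain ⟨p0, hp0⟩ := exists_limit l (Z := fun i => X i k / Z i) (C := 1) (by
        filter_upwards [hc] with i h1
        rw [abs_div]
        exact div_le_one_of_le₀ (not_le.1 h1).le (abs_nonneg _))
      -- the chart replacing `x k` by `z * (p0 + x k)`
      have hana : AnalyticAt ℝ (fun p : (Fin n → ℝ) × ℝ =>
          Function.update p.1 k (p.2 * (p0 + p.1 k))) 0 := by
        refine analyticAt_pi_iff.2 fun j => ?_
        by_cases hj : j = k
        · subst hj
          simp only [Function.update_self]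
          exact analyticAt_snd.mul (analyticAt_const.add (analyticAt_fst_apply _ _))
        · simp only [Function.update_of_ne hj]
          exact analyticAt_fst_apply _ _
      have hL : Lift l (fun i => (X i, Z i))
          (fun p : (Fin n → ℝ) × ℝ => (Function.update p.1 k (p.2 * (p0 + p.1 k)), p.2))
          (fun i => (Function.update (X i) k (X i k / Z i - p0), Z i)) :=
        { analytic := hana.prod analyticAt_snd
          map_zero := by
            ext j
            · by_cases hj : j = k
              · subst hj; simp
              · simp [Function.update_of_ne hj]
            · simp
          tendsto := by
            refine Tendsto.prodMk_nhds (tendsto_pi_nhds.2 fun j => ?_) hZ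
            by_cases hj : j = k
            · subst hj
              simp only [Function.update_self]
              simpa using hp0.sub_const p0
            · simp only [Function.update_of_ne hj]
              exact (tendsto_pi_nhds.1 hX) j
          eq := by
            filter_upwards [hZ0] with i hi
            simp only [Function.update_self, add_sub_cancel, Function.update_idem]
            rw [mul_div_cancel₀ _ hi, Function.update_eq_self] }
      refine ⟨_, _, fun p => (p0 + p.1 k) * ∏ j, (Function.update p.1 k (p.2 * (p0 + p.1 k))) j
        ^ γ' j, hL, fun j => ?_, ?_, ?_⟩
      · have hlin : NC (pcoords n) (fun p => p0 + p.1 k) := by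
          by_cases h : p0 = 0
          · subst h
            simpa using NC.fst_apply k
          · exact NC.unit (analyticAt_const.add (analyticAt_fst_apply _ _)) (by simpa using h)
        refine Fin.cases ?_ (fun j => ?_) j
        · exact NC.snd
        · simp only [Fin.cons_succ]
          by_cases hj : j = k
          · subst hj
            simp only [Function.update_self]
            exact NC.snd.mul hlin
          · simp only [Function.update_of_ne hj]
            exact NC.fst_apply j
      · refine (analyticAt_const.add (analyticAt_fst_apply _ _)).mul
          (Finset.analyticAt_fun_prod _ fun j _ => AnalyticAt.pow ?_ _)
        exact (analyticAt_pi_iff.1 hana) j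
      · refine Eventually.of_forall fun p => ?_
        simp only
        rw [hprod, Function.update_self]
        ring

/-- Power substitutions lift, after a choice of signs. -/
lemma power_lift {ι : Type*} (l : Ultrafilter ι) {n : ℕ} {X : ι → Fin n → ℝ}
    (hX : Tendsto X l (𝓝 0)) {M : ℕ} (hM : M ≠ 0) :
    ∃ (ε : Fin n → ℝ) (Y : ι → Fin n → ℝ), (∀ k, ε k ≠ 0) ∧
      Lift l X (fun y k => ε k * y k ^ M) Y := by
  have hsign : ∀ k : Fin n, ∃ ε : ℝ, ε ≠ 0 ∧
      ∀ᶠ i in (l : Filter ι), ε * |X i k| = X i k := by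
    intro k
    rcases l.em (fun i => 0 ≤ X i k) with h | h
    · exact ⟨1, one_ne_zero, by filter_upwards [h] with i hi; rw [abs_of_nonneg hi, one_mul]⟩
    · refine ⟨-1, by norm_num, ?_⟩
      filter_upwards [h] with i hi
      rw [abs_of_neg (not_le.1 hi)]; ring
  choose ε hε hεX using hsign
  refine ⟨ε, fun i k => |X i k| ^ ((M : ℝ)⁻¹), hε, ?_, ?_, ?_, ?_⟩
  · exact analyticAt_pi_iff.2 fun k => analyticAt_const.mul ((analyticAt_coord k _).pow _)
  · ext k; simp [hM]
  · refine tendsto_pi_nhds.2 fun k => ?_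
    have h1 : Tendsto (fun i => |X i k|) l (𝓝 0) := by
      simpa using ((tendsto_pi_nhds.1 hX) k).abs
    have h2 := h1.rpow_const (p := (M : ℝ)⁻¹) (Or.inr (by positivity))
    rwa [Real.zero_rpow (by positivity)] at h2
  · filter_upwards [eventually_all.2 hεX] with i hi
    ext k
    rw [Real.rpow_inv_natCast_pow (abs_nonneg _) hM, hi]

/-! ### Regular germs and the Tschirnhausen transformation -/

section Expansion
variable {E : Type*} [NormedAddCommGroup E] [NormedSpace ℝ E]

/-- Taylor expansion in the last variable of a germ that is regular of order `d` in it. -/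
lemma regular_expansion {s : ℝ → ℝ} (hs : AnalyticAt ℝ s 0) (d : ℕ) :
    ∀ (g : E × ℝ → ℝ) (_ : AnalyticAt ℝ g 0) (_ : ∀ᶠ z in 𝓝 (0 : ℝ), g (0, z) = z ^ d * s z),
      ∃ (c : ℕ → E → ℝ) (u : E × ℝ → ℝ), (∀ i, AnalyticAt ℝ (c i) 0) ∧
        (∀ i, i < d → c i 0 = 0) ∧ AnalyticAt ℝ u 0 ∧ u 0 = s 0 ∧
        ∀ᶠ p in 𝓝 (0 : E × ℝ), g p = ∑ i ∈ Finset.range d, c i p.1 * p.2 ^ i + p.2 ^ d * u p := by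
  induction d with
  | zero =>
    intro g hg h
    refine ⟨fun _ _ => 0, g, fun _ => analyticAt_const, by simp, hg, ?_, by simp⟩
    have := h.self_of_nhds
    rwa [pow_zero, one_mul] at this
  | succ d ih =>
    intro g hg h
    obtain ⟨g1, hg1, hdiv⟩ := analytic_division (ContinuousLinearMap.snd ℝ E ℝ) ((0, 1) : E × ℝ) hg
    have hdiv' : ∀ᶠ p in 𝓝 (0 : E × ℝ), g p = g (p.1, 0) + p.2 * g1 p := by
      filter_upwards [hdiv] with p hp
      rw [hp]
      congr 2
      ext <;> simp
    have h00 : g (0, 0) = 0 := by simpa using h.self_of_nhds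
    have hT := (tendsto_const_nhds (x := (0 : E)) (f := 𝓝 (0 : ℝ))).prodMk_nhds
      (tendsto_id (α := ℝ))
    rw [show (((0 : E), (0 : ℝ))) = 0 from rfl] at hT
    have hcont : ContinuousAt (fun z : ℝ => g1 ((0 : E), z)) 0 :=
      (AnalyticAt.fun_comp (g := g1) (f := fun z : ℝ => ((0 : E), z)) hg1
        (analyticAt_const.prod analyticAt_id)).continuousAt
    have hg1o : ∀ᶠ z in 𝓝 (0 : ℝ), g1 (0, z) = z ^ d * s z := by
      refine (hcont.eventuallyEq_nhds_iff_eventuallyEq_nhdsNE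
        ((continuousAt_id.pow d).mul hs.continuousAt)).1 ?_
      filter_upwards [(hT.eventually hdiv').filter_mono nhdsWithin_le_nhds,
        h.filter_mono nhdsWithin_le_nhds, self_mem_nhdsWithin] with z h1 h2 h3
      have h3' : z ≠ 0 := h3
      simp only [h00, zero_add, id] at h1
      show g1 (0, z) = z ^ d * s z
      rw [h1, pow_succ'] at h2
      exact mul_left_cancel₀ h3' (by simpa [mul_assoc] using h2)
    obtain ⟨c, u, hc, hc0, hu, hu0, he⟩ := ih g1 hg1 hg1o
    refine ⟨fun i => Nat.casesOn i (fun x => g (x, 0)) c, u, ?_, ?_, hu, hu0, ?_⟩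
    · rintro (_ | i)
      · exact AnalyticAt.fun_comp (g := g) (f := fun x : E => (x, (0 : ℝ))) hg
          (analyticAt_id.prod analyticAt_const)
      · exact hc i
    · rintro (_ | i) hi
      · exact h00
      · exact hc0 i (by omega)
    · filter_upwards [hdiv', he] with p h1 h2
      rw [h1, h2, Finset.sum_range_succ', mul_add, Finset.mul_sum]
      simp only [pow_zero, mul_one, pow_succ']
      have : ∀ i ∈ Finset.range d, p.2 * (c i p.1 * p.2 ^ i) = c i p.1 * (p.2 * p.2 ^ i) :=
        fun i _ => by ring
      rw [Finset.sum_congr rfl this]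
      show _ = _ + g (p.1, 0) + _
      ring

/-- Pointwise convergence of polynomials of bounded degree forces convergence of the top
coefficient, by Lagrange interpolation. -/
lemma tendsto_top_coeff {α : Type*} {L : Filter α} {m : ℕ} {p : ℕ → α → ℝ} {R : Polynomial ℝ}
    (hR : R.degree < (m + 1 : ℕ))
    (h : ∀ b : ℝ, Tendsto (fun t => ∑ i ∈ Finset.range (m + 1), p i t * b ^ i) L
      (𝓝 (R.eval b))) : Tendsto (p m) L (𝓝 (R.coeff m)) := by
  have hinj : Set.InjOn (fun i : ℕ => (i : ℝ)) (Finset.range (m + 1)) :=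
    Nat.cast_injective.injOn
  have key : ∀ P : Polynomial ℝ, P.degree < (m + 1 : ℕ) → P.coeff m =
      ∑ i ∈ Finset.range (m + 1), P.eval (i : ℝ) /
        ∏ j ∈ (Finset.range (m + 1)).erase i, ((i : ℝ) - (j : ℝ)) := by
    intro P hP
    have := Lagrange.coeff_eq_sum hinj (P := P) (by simpa using hP)
    simpa using this
  have hp : ∀ t, p m t = ∑ i ∈ Finset.range (m + 1),
      (∑ k ∈ Finset.range (m + 1), p k t * (i : ℝ) ^ k) /
        ∏ j ∈ (Finset.range (m + 1)).erase i, ((i : ℝ) - (j : ℝ)) := by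
    intro t
    have h1 := key (∑ k ∈ Finset.range (m + 1), Polynomial.monomial k (p k t)) (by
      refine lt_of_le_of_lt (Polynomial.degree_sum_le _ _) ?_
      rw [Finset.sup_lt_iff (by exact WithBot.bot_lt_coe _)]
      intro k hk
      exact lt_of_le_of_lt (Polynomial.degree_monomial_le _ _)
        (by exact_mod_cast Finset.mem_range.1 hk))
    simpa [Polynomial.finsetSum_coeff, Polynomial.coeff_monomial, Polynomial.eval_finsetSum]
      using h1
  rw [key R hR, show p m = _ from funext hp]
  exact tendsto_finsetSum _ fun i _ => (h (i : ℝ)).div_const _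

/-- Tschirnhausen transformation: after an analytic translation in the last variable, a germ that
is regular of order `m + 1` has no term of degree `m`. -/
lemma tschirnhausen [CompleteSpace E] {s : ℝ → ℝ} (hs : AnalyticAt ℝ s 0) (hs0 : s 0 ≠ 0) (m : ℕ)
    {g : E × ℝ → ℝ} (hg : AnalyticAt ℝ g 0)
    (ho : ∀ᶠ z in 𝓝 (0 : ℝ), g (0, z) = z ^ (m + 1) * s z) :
    ∃ (b : E → ℝ) (c : ℕ → E → ℝ) (u : E × ℝ → ℝ), AnalyticAt ℝ b 0 ∧ b 0 = 0 ∧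
      (∀ i, AnalyticAt ℝ (c i) 0) ∧ (∀ i, i < m → c i 0 = 0) ∧ AnalyticAt ℝ u 0 ∧ u 0 ≠ 0 ∧
      ∀ᶠ p in 𝓝 (0 : E × ℝ), g (p.1, b p.1 + p.2) =
        ∑ i ∈ Finset.range m, c i p.1 * p.2 ^ i + p.2 ^ (m + 1) * u p := by
  -- expand with the translation as an additional parameter
  have hG : AnalyticAt ℝ (fun q : (E × ℝ) × ℝ => g (q.1.1, q.1.2 + q.2)) 0 :=
    AnalyticAt.fun_comp (g := g) (f := fun q : (E × ℝ) × ℝ => (q.1.1, q.1.2 + q.2))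
      (by
        rw [show ((0 : (E × ℝ) × ℝ).1.1, (0 : (E × ℝ) × ℝ).1.2 + (0 : (E × ℝ) × ℝ).2) =
          (0 : E × ℝ) by ext <;> simp]
        exact hg)
      ((AnalyticAt.fun_comp (g := Prod.fst) analyticAt_fst analyticAt_fst).prod
        ((AnalyticAt.fun_comp (g := Prod.snd) analyticAt_snd analyticAt_fst).add analyticAt_snd))
  obtain ⟨c, u, hc, hc0, hu, hu0, he⟩ := regular_expansion (E := E × ℝ) hs (m + 1) _ hG
    (by simpa using ho)
  have hline : AnalyticAt ℝ (fun t : ℝ => c m (0, t)) 0 :=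
    AnalyticAt.fun_comp (g := c m) (f := fun t : ℝ => ((0 : E), t)) (hc m)
      (analyticAt_const.prod analyticAt_id)
  -- the slope of the coefficient of degree `m` in the direction of the translation
  have hslope : Tendsto (fun t : ℝ => c m (0, t) / t) (𝓝[≠] 0) (𝓝 ((m + 1) * s 0)) := by
    have hR : (Polynomial.C (s 0) * ((Polynomial.X + 1) ^ (m + 1) - Polynomial.X ^ (m + 1)) :
        Polynomial ℝ).degree < (m + 1 : ℕ) := by
      rw [Polynomial.degree_C_mul hs0]
      have hd : ((Polynomial.X + 1 : Polynomial ℝ) ^ (m + 1)).degree = (m + 1 : ℕ) := by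
        have := Polynomial.degree_X_add_C (1 : ℝ)
        rw [Polynomial.degree_pow, ← Polynomial.C_1, this]; simp
      rw [← hd]
      refine Polynomial.degree_sub_lt_left (by rw [hd, Polynomial.degree_X_pow]) ?_ ?_
      · exact pow_ne_zero _ (Polynomial.X_add_C_ne_zero (1 : ℝ))
      · have h1 := (Polynomial.monic_X_add_C (1 : ℝ)).pow (m + 1)
        rw [Polynomial.C_1] at h1
        rw [h1.leadingCoeff, (Polynomial.monic_X_pow (m + 1)).leadingCoeff]
    have h1 := tendsto_top_coeff (L := 𝓝[≠] (0 : ℝ)) (m := m)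
      (p := fun i t => c i (0, t) / t ^ (m + 1 - i)) hR ?_
    · have hco : (Polynomial.C (s 0) * ((Polynomial.X + 1) ^ (m + 1) - Polynomial.X ^ (m + 1)) :
          Polynomial ℝ).coeff m = (m + 1) * s 0 := by
        rw [Polynomial.coeff_C_mul, Polynomial.coeff_sub, Polynomial.coeff_X_add_one_pow,
          Polynomial.coeff_X_pow]
        simp
        ring
      rw [hco] at h1
      simpa using h1
    · intro b
      have hpt : Tendsto (fun t : ℝ => (((0 : E), t), t * b)) (𝓝[≠] 0) (𝓝 0) := by
        have : ContinuousAt (fun t : ℝ => (((0 : E), t), t * b)) 0 := by fun_prop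
        have h2 := this.tendsto
        simp only [zero_mul] at h2
        exact h2.mono_left nhdsWithin_le_nhds
      have hpt2 : Tendsto (fun t : ℝ => t + t * b) (𝓝[≠] 0) (𝓝 0) := by
        have : ContinuousAt (fun t : ℝ => t + t * b) 0 := by fun_prop
        have h2 := this.tendsto
        simp only [zero_mul, add_zero] at h2
        exact h2.mono_left nhdsWithin_le_nhds
      have hlim : Tendsto (fun t : ℝ => (1 + b) ^ (m + 1) * s (t + t * b) -
          b ^ (m + 1) * u ((0, t), t * b)) (𝓝[≠] 0)
          (𝓝 ((1 + b) ^ (m + 1) * s 0 - b ^ (m + 1) * u 0)) :=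
        ((hs.continuousAt.tendsto.comp hpt2).const_mul _).sub
          ((hu.continuousAt.tendsto.comp hpt).const_mul _)
      rw [hu0] at hlim
      have hval : Polynomial.eval b (Polynomial.C (s 0) *
          ((Polynomial.X + 1) ^ (m + 1) - Polynomial.X ^ (m + 1)) : Polynomial ℝ) =
          (1 + b) ^ (m + 1) * s 0 - b ^ (m + 1) * s 0 := by
        simp; ring
      rw [hval]
      refine hlim.congr' ?_
      filter_upwards [hpt.eventually he, hpt2.eventually ho, self_mem_nhdsWithin] with t h2 h3 h4
      have h4' : t ≠ 0 := h4
      have h5 : ∀ i ∈ Finset.range (m + 1), c i (0, t) / t ^ (m + 1 - i) * b ^ i =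
          (c i (0, t) * (t * b) ^ i) / t ^ (m + 1) := by
        intro i hi
        have hi' : i ≤ m + 1 := (Finset.mem_range.1 hi).le
        have h6 : t ^ (m + 1) = t ^ (m + 1 - i) * t ^ i := by rw [← pow_add]; congr 1; omega
        rw [h6, mul_pow]
        field_simp
      rw [Finset.sum_congr rfl h5, ← Finset.sum_div]
      rw [h3] at h2
      have h7 : ∑ i ∈ Finset.range (m + 1), c i (0, t) * (t * b) ^ i =
          (t + t * b) ^ (m + 1) * s (t + t * b) - (t * b) ^ (m + 1) * u ((0, t), t * b) := by
        rw [h2]; ring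
      rw [h7, show t + t * b = t * (1 + b) by ring, mul_pow, mul_pow]
      field_simp
  have hder : deriv (fun t : ℝ => c m (0, t)) 0 = (m + 1) * s 0 := by
    have h1 := hline.differentiableAt.hasDerivAt.tendsto_slope
    refine tendsto_nhds_unique (h1.congr fun t => ?_) hslope
    have h00 : c m ((0 : E), (0 : ℝ)) = 0 := hc0 m (by omega)
    rw [slope_def_field, h00]
    simp
  have hne : (m + 1 : ℝ) * s 0 ≠ 0 := mul_ne_zero (by positivity) hs0
  have hcd : ContDiffAt ℝ ⊤ (c m) (0 : E × ℝ) := (hc m).contDiffAt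
  have hfd : fderiv ℝ (c m) 0 ((0 : E), (1 : ℝ)) = (m + 1) * s 0 := by
    rw [← hder]
    have h1 : HasDerivAt (fun t : ℝ => ((0 : E), t)) ((0 : E), (1 : ℝ)) 0 :=
      (hasDerivAt_const _ _).prodMk (hasDerivAt_id _)
    exact (((hc m).differentiableAt.hasFDerivAt.comp_hasDerivAt (f := fun t : ℝ => ((0 : E), t))
      0 h1).deriv).symm
  have hinv : (fderiv ℝ (c m) (0 : E × ℝ) ∘L .inr ℝ E ℝ).IsInvertible := by
    refine ⟨ContinuousLinearEquiv.unitsEquivAut ℝ (Units.mk0 _ hne), ?_⟩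
    ext
    simp [hfd]
  have hψ := hcd.contDiffAt_implicitFunction (by simp) hinv
  have hψ0 := hcd.implicitFunction_apply_self (by simp) hinv
  have hψe := hcd.eventually_apply_implicitFunction (by simp) hinv
  set b : E → ℝ := hcd.implicitFunction (by simp) hinv with hb
  have hbA : AnalyticAt ℝ b 0 := hψ.analyticAt
  have hb0 : b 0 = 0 := hψ0
  have hbt : Tendsto b (𝓝 0) (𝓝 0) := by simpa [hb0] using hbA.continuousAt.tendsto
  have hpair : AnalyticAt ℝ (fun x : E => (x, b x)) 0 := analyticAt_id.prod hbA
  have hpair0 : ((0 : E), b 0) = 0 := by rw [hb0]; rfl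
  have hcm : c m 0 = 0 := hc0 m (by omega)
  have htri : AnalyticAt ℝ (fun p : E × ℝ => ((p.1, b p.1), p.2)) 0 :=
    (AnalyticAt.fun_comp (g := fun x : E => (x, b x)) (f := fun p : E × ℝ => p.1) hpair
      analyticAt_fst).prod analyticAt_snd
  have htri0 : (((0 : E × ℝ).1, b (0 : E × ℝ).1), (0 : E × ℝ).2) = ((0, 0) : (E × ℝ) × ℝ) := by
    simp [hb0]
  refine ⟨b, fun i x => c i (x, b x), fun p => u ((p.1, b p.1), p.2), hbA, hb0, fun i => ?_,
    fun i hi => ?_, ?_, ?_, ?_⟩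
  · exact AnalyticAt.fun_comp (g := c i) (by rw [hpair0]; exact hc i) hpair
  · show c i (0, b 0) = 0
    rw [hpair0]; exact hc0 i (by omega)
  · exact AnalyticAt.fun_comp (g := u) (by rw [htri0]; exact hu) htri
  · show u (((0 : E × ℝ).1, b (0 : E × ℝ).1), (0 : E × ℝ).2) ≠ 0
    rw [htri0]; exact hu0.trans_ne hs0
  · have ht : Tendsto (fun p : E × ℝ => ((p.1, b p.1), p.2)) (𝓝 0) (𝓝 0) := by
      have := htri.continuousAt.tendsto
      rwa [htri0] at this
    have hfst : Tendsto (fun p : E × ℝ => p.1) (𝓝 0) (𝓝 0) := continuous_fst.tendsto _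
    filter_upwards [ht.eventually he, hfst.eventually hψe] with p h1 h2
    rw [h1, Finset.sum_range_succ, h2, hcm]
    ring

end Expansion

/-! ### Lowering the order by blowing up -/

/-- The inductive claim: a germ regular of order `d` in the last variable, multiplied by any germ
in the other variables, acquires normal crossings in some chart through which the family
lifts. -/
def Reg {ι : Type*} (l : Ultrafilter ι) (n d : ℕ) : Prop :=
  ∀ (s : ℝ → ℝ) (X : ι → Fin n → ℝ) (Z : ι → ℝ) (e : (Fin n → ℝ) → ℝ) (g : (Fin n → ℝ) × ℝ → ℝ),
    AnalyticAt ℝ s 0 → s 0 ≠ 0 → Tendsto X l (𝓝 0) → Tendsto Z l (𝓝 0) → AnalyticAt ℝ e 0 →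
    AnalyticAt ℝ g 0 → (∀ᶠ z in 𝓝 (0 : ℝ), g (0, z) = z ^ d * s z) →
    ∃ (φ : (Fin n → ℝ) × ℝ → (Fin n → ℝ) × ℝ) (V : ι → (Fin n → ℝ) × ℝ),
      Lift l (fun i => (X i, Z i)) φ V ∧ NCZ (pcoords n) (fun p => e (φ p).1 * g (φ p))

/-- A real polynomial of degree `m + 1` without term of degree `m` that is not a pure power has
only roots of multiplicity at most `m`. -/
lemma root_order_lt {m : ℕ} (a : ℕ → ℝ) {u : ℝ} (hu : u ≠ 0) {i₀ : ℕ} (hi : i₀ < m)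
    (ha : a i₀ ≠ 0) (w₀ : ℝ) :
    ∃ (d : ℕ) (s : ℝ → ℝ), d < m + 1 ∧ AnalyticAt ℝ s 0 ∧ s 0 ≠ 0 ∧
      ∀ w, ∑ i ∈ Finset.range m, a i * (w₀ + w) ^ i + (w₀ + w) ^ (m + 1) * u = w ^ d * s w := by
  classical
  set A : Polynomial ℝ := ∑ i ∈ Finset.range m, Polynomial.monomial i (a i) with hA
  set P : Polynomial ℝ := A + Polynomial.monomial (m + 1) u with hP
  have hco : ∀ k, P.coeff k = (if k < m then a k else 0) + if m + 1 = k then u else 0 := by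
    intro k
    simp [hP, hA, Polynomial.coeff_monomial]
  have hP0 : P ≠ 0 := by
    intro h
    have := hco (m + 1)
    rw [h] at this
    simp at this
    exact hu this.symm
  have hdeg : P.natDegree ≤ m + 1 := by
    refine Polynomial.natDegree_le_iff_coeff_eq_zero.2 fun k hk => ?_
    rw [hco, if_neg (by omega), if_neg (by omega), add_zero]
  obtain ⟨Q, hQ, hQr⟩ := Polynomial.exists_eq_pow_rootMultiplicity_mul_and_not_dvd P hP0 w₀
  set k := P.rootMultiplicity w₀
  have hQ0 : Q ≠ 0 := by rintro rfl; exact hQr (dvd_zero _)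
  have hdegQ : P.natDegree = k + Q.natDegree := by
    conv_lhs => rw [hQ]
    rw [Polynomial.natDegree_mul (pow_ne_zero _ (Polynomial.X_sub_C_ne_zero _)) hQ0,
      Polynomial.natDegree_pow, Polynomial.natDegree_X_sub_C, mul_one]
  have hQev : Q.eval w₀ ≠ 0 := fun h => hQr (Polynomial.dvd_iff_isRoot.2 h)
  have hk : k < m + 1 := by
    by_contra hk
    have hk' : k = m + 1 := by omega
    have hQc : Q.natDegree = 0 := by omega
    obtain ⟨q, rfl⟩ : ∃ q, Q = Polynomial.C q := ⟨_, Polynomial.eq_C_of_natDegree_eq_zero hQc⟩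
    have hq : q ≠ 0 := by simpa using hQ0
    rw [hk', sub_eq_add_neg, ← Polynomial.C_neg] at hQ
    have hcQ : ∀ j, P.coeff j = (-w₀) ^ (m + 1 - j) * ((m + 1).choose j : ℝ) * q := by
      intro j
      rw [hQ, Polynomial.coeff_mul_C, Polynomial.coeff_X_add_C_pow]
    have h1 := hcQ m
    rw [hco, if_neg (by omega), if_neg (by omega)] at h1
    have hw : w₀ = 0 := by
      have h2 : (-w₀) * ((m : ℝ) + 1) * q = 0 := by
        simpa using h1.symm
      have h3 : ((m : ℝ) + 1) ≠ 0 := by positivity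
      simpa [h3, hq] using h2
    have h4 := hcQ i₀
    rw [hco, if_pos hi, if_neg (by omega), add_zero, hw, neg_zero, zero_pow (by omega), zero_mul,
      zero_mul] at h4
    exact ha h4
  refine ⟨k, fun w => Q.eval (w₀ + w), hk, ?_, by simpa using hQev, fun w => ?_⟩
  · have := (AnalyticAt.aeval_polynomial (𝕜 := ℝ) (f := fun w : ℝ => w₀ + w) (z := 0)
      (analyticAt_const.add analyticAt_id) Q)
    simpa using this
  · have h1 : P.eval (w₀ + w) =
        ∑ i ∈ Finset.range m, a i * (w₀ + w) ^ i + (w₀ + w) ^ (m + 1) * u := by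
      simp [hP, hA, Polynomial.eval_finsetSum, mul_comm u]
    rw [← h1]
    conv_lhs => rw [hQ]
    simp

lemma analyticAt_comp_fst {n : ℕ} {a : (Fin n → ℝ) → ℝ} (ha : AnalyticAt ℝ a 0) :
    AnalyticAt ℝ (fun p : (Fin n → ℝ) × ℝ => a p.1) 0 :=
  AnalyticAt.fun_comp (g := a) (f := fun p : (Fin n → ℝ) × ℝ => p.1) ha analyticAt_fst

/-- The case in which the coefficients are, up to bounded factors, the powers of one monomial `μ`
that a root of the polynomial is expected to scale with.  If the last variable is `O(μ)` along the
family, blowing up lowers the order; otherwise `μ` is negligible against the last variable and the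
top term dominates. -/
lemma reg_of_monomial {ι : Type*} {l : Ultrafilter ι} {n m : ℕ} (IH : ∀ d < m + 1, Reg l n d)
    {Y : ι → Fin n → ℝ} {Z : ι → ℝ} (hY : Tendsto Y l (𝓝 0)) (hZ : Tendsto Z l (𝓝 0))
    {e : (Fin n → ℝ) → ℝ} (hea : AnalyticAt ℝ e 0) (he : NC (coords n) e) {γ : Fin n → ℕ}
    (hγ : ∏ k, (0 : ℝ) ^ γ k = 0) {a : ℕ → (Fin n → ℝ) → ℝ} (ha : ∀ i < m, AnalyticAt ℝ (a i) 0)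
    {i₀ : ℕ} (hi₀ : i₀ < m) (hai₀ : a i₀ 0 ≠ 0) {u : (Fin n → ℝ) × ℝ → ℝ}
    (hu : AnalyticAt ℝ u 0) (hu0 : u 0 ≠ 0) {G : (Fin n → ℝ) × ℝ → ℝ}
    (hG : ∀ᶠ p in 𝓝 (0 : (Fin n → ℝ) × ℝ), G p =
      ∑ i ∈ Finset.range m, a i p.1 * (∏ k, p.1 k ^ γ k) ^ (m + 1 - i) * p.2 ^ i +
        p.2 ^ (m + 1) * u p) :
    ∃ (φ : (Fin n → ℝ) × ℝ → (Fin n → ℝ) × ℝ) (V : ι → (Fin n → ℝ) × ℝ),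
      Lift l (fun i => (Y i, Z i)) φ V ∧ NCZ (pcoords n) (fun p => e (φ p).1 * G (φ p)) := by
  set μ : (Fin n → ℝ) → ℝ := fun y => ∏ k, y k ^ γ k with hμ
  change ∀ᶠ p in 𝓝 (0 : (Fin n → ℝ) × ℝ), G p = ∑ i ∈ Finset.range m,
    a i p.1 * μ p.1 ^ (m + 1 - i) * p.2 ^ i + p.2 ^ (m + 1) * u p at hG
  have hμa : AnalyticAt ℝ μ 0 := analyticAt_monomial γ 0
  have hμ0 : μ 0 = 0 := by simpa [hμ] using hγ
  by_cases hC : ∃ C, ∀ᶠ i in (l : Filter ι), |Z i| ≤ C * |μ (Y i)|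
  · obtain ⟨C, hC⟩ := hC
    obtain ⟨w₀, hw₀⟩ := exists_limit l (Z := fun i => Z i / μ (Y i)) (C := |C|) (by
      filter_upwards [hC] with i hi
      rw [abs_div]
      refine div_le_of_le_mul₀ (abs_nonneg _) (abs_nonneg _) (hi.trans ?_)
      exact mul_le_mul_of_nonneg_right (le_abs_self C) (abs_nonneg _))
    have hψa : AnalyticAt ℝ (fun p : (Fin n → ℝ) × ℝ => (p.1, μ p.1 * (w₀ + p.2))) 0 :=
      analyticAt_fst.prod ((analyticAt_comp_fst hμa).mul (analyticAt_const.add analyticAt_snd))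
    have hψ0 : ((0 : (Fin n → ℝ) × ℝ).1, μ (0 : (Fin n → ℝ) × ℝ).1 *
        (w₀ + (0 : (Fin n → ℝ) × ℝ).2)) = 0 := by
      simp [hμ0]
    have hL : Lift l (fun i => (Y i, Z i))
        (fun p : (Fin n → ℝ) × ℝ => (p.1, μ p.1 * (w₀ + p.2)))
        (fun i => (Y i, Z i / μ (Y i) - w₀)) :=
      { analytic := hψa
        map_zero := hψ0
        tendsto := hY.prodMk_nhds (by simpa using hw₀.sub_const w₀)
        eq := by
          filter_upwards [hC] with i hi
          rw [add_sub_cancel]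
          by_cases h : μ (Y i) = 0
          · rw [h, abs_zero, mul_zero] at hi
            rw [h, zero_mul, abs_nonpos_iff.1 hi]
          · rw [mul_div_cancel₀ _ h] }
    obtain ⟨d, s, hd, hs, hs0, hds⟩ := root_order_lt (fun i => a i 0) hu0 hi₀ hai₀ w₀
    have hua := hL.analyticAt_comp hu
    obtain ⟨φ, V, hLV, hN⟩ := IH d hd s Y (fun i => Z i / μ (Y i) - w₀)
      (fun y => e y * μ y ^ (m + 1))
      (fun p => ∑ i ∈ Finset.range m, a i p.1 * (w₀ + p.2) ^ i +
        (w₀ + p.2) ^ (m + 1) * u (p.1, μ p.1 * (w₀ + p.2)))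
      hs hs0 hY (by simpa using hw₀.sub_const w₀) (hea.mul (hμa.pow _))
      ((Finset.analyticAt_fun_sum _ fun i hi => (analyticAt_comp_fst (ha i
        (Finset.mem_range.1 hi))).mul ((analyticAt_const.add analyticAt_snd).pow _)).add
        (((analyticAt_const.add analyticAt_snd).pow _).mul hua))
      (Eventually.of_forall fun w => by
        rw [← hds w]
        simp only [hμ0, zero_mul]
        rfl)
    refine ⟨_, V, hL.comp hLV, ?_⟩
    have hkey : ∀ᶠ p in 𝓝 (0 : (Fin n → ℝ) × ℝ),
        e (φ p).1 * G ((φ p).1, μ (φ p).1 * (w₀ + (φ p).2)) =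
        e (φ p).1 * μ (φ p).1 ^ (m + 1) * (∑ i ∈ Finset.range m, a i (φ p).1 * (w₀ + (φ p).2) ^ i +
        (w₀ + (φ p).2) ^ (m + 1) * u ((φ p).1, μ (φ p).1 * (w₀ + (φ p).2))) := by
      filter_upwards [(hL.tendsto_map.comp hLV.tendsto_map).eventually hG] with p hp
      simp only [Function.comp] at hp
      have hfac : ∑ i ∈ Finset.range m, a i (φ p).1 * μ (φ p).1 ^ (m + 1 - i) *
          (μ (φ p).1 * (w₀ + (φ p).2)) ^ i =
          μ (φ p).1 ^ (m + 1) * ∑ i ∈ Finset.range m, a i (φ p).1 * (w₀ + (φ p).2) ^ i := by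
        rw [Finset.mul_sum]
        refine Finset.sum_congr rfl fun i hi => ?_
        have : μ (φ p).1 ^ (m + 1) = μ (φ p).1 ^ (m + 1 - i) * μ (φ p).1 ^ i := by
          rw [← pow_add]; congr 1; have := Finset.mem_range.1 hi; omega
        rw [this, mul_pow]
        ring
      rw [hp, hfac, mul_pow]
      ring
    rcases hN with hN | hN
    · exact Or.inl (hN.congr hkey)
    · right
      filter_upwards [hN, hkey] with p h1 h2
      rw [h2, h1]
  · have hC' : ∀ C, ∀ᶠ i in (l : Filter ι), C * |μ (Y i)| < |Z i| := by
      intro C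
      have := Ultrafilter.eventually_not.2 (fun h => hC ⟨C, h⟩)
      simpa using this
    have hZ0 : ∀ᶠ i in (l : Filter ι), Z i ≠ 0 := by
      filter_upwards [hC' 0] with i hi
      simpa using hi
    have hlim : Tendsto (fun i => μ (Y i) / Z i) l (𝓝 0) := by
      rw [Metric.tendsto_nhds]
      intro ε hε
      filter_upwards [hC' ε⁻¹, hZ0] with i h1 h2
      rw [Real.dist_eq, sub_zero, abs_div, div_lt_iff₀ (abs_pos.2 h2)]
      rwa [inv_mul_lt_iff₀ hε] at h1
    obtain ⟨φ, V, q, hL, hNC, hq, hqe⟩ := principalize l _ γ rfl Y Z hY hZ hZ0 hlim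
    have hq0 : q 0 = 0 := by
      refine tendsto_nhds_unique (hq.continuousAt.tendsto.comp hL.tendsto) (hlim.congr' ?_)
      filter_upwards [hL.tendsto.eventually hqe, hL.eq, hZ0] with i h1 h2 h3
      rw [h2] at h1
      simp only at h1
      rw [hμ, Function.comp]
      simp only
      rw [h1, mul_div_cancel_left₀ _ h3]
    refine ⟨φ, V, hL, Or.inl ?_⟩
    have hfst : AnalyticAt ℝ (fun p => (φ p).1) 0 :=
      AnalyticAt.fun_comp (g := Prod.fst) analyticAt_fst hL.analytic
    have hunit : NC (pcoords n) (fun p => ∑ i ∈ Finset.range m, a i (φ p).1 * q p ^ (m + 1 - i) +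
        u (φ p)) := by
      refine NC.unit ((Finset.analyticAt_fun_sum _ fun i hi => ?_).add (hL.analyticAt_comp hu)) ?_
      · exact (hL.analyticAt_comp (f := fun p => a i p.1)
          (analyticAt_comp_fst (ha i (Finset.mem_range.1 hi)))).mul (hq.pow _)
      · rw [Finset.sum_eq_zero, zero_add, hL.map_zero]
        · exact hu0
        · intro i hi
          have := Finset.mem_range.1 hi
          rw [hq0, zero_pow (by omega), mul_zero]
    have heN : NC (pcoords n) (fun p => e (φ p).1) :=
      NC.comp (g := fun p : (Fin n → ℝ) × ℝ => e p.1) (NC.fst he) hL.analytic hL.map_zero hNC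
    have hz : NC (pcoords n) (fun p => (φ p).2) := hNC 0
    refine (heN.mul ((hz.pow (m + 1)).mul hunit)).congr ?_
    filter_upwards [hL.tendsto_map.eventually hG, hqe] with p h1 h2
    have hfac : ∑ i ∈ Finset.range m, a i (φ p).1 * ((φ p).2 * q p) ^ (m + 1 - i) *
        (φ p).2 ^ i = (φ p).2 ^ (m + 1) *
          ∑ i ∈ Finset.range m, a i (φ p).1 * q p ^ (m + 1 - i) := by
      rw [Finset.mul_sum]
      refine Finset.sum_congr rfl fun i hi => ?_
      have : (φ p).2 ^ (m + 1) = (φ p).2 ^ (m + 1 - i) * (φ p).2 ^ i := by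
        rw [← pow_add]; congr 1; have := Finset.mem_range.1 hi; omega
      rw [this, mul_pow]
      ring
    change μ (φ p).1 = _ at h2
    rw [h1, h2, hfac]
    ring

/-! ### Induction on order and dimension -/

/-- Coefficients with normal crossings and pairwise comparable weighted powers: the smallest
of the weighted exponents gives the Newton polygon slope, made integral by a power substitution. -/
lemma reg_of_prepared {ι : Type*} {l : Ultrafilter ι} {n m : ℕ} (IH : ∀ d < m + 1, Reg l n d)
    {X : ι → Fin n → ℝ} {Z : ι → ℝ} (hX : Tendsto X l (𝓝 0)) (hZ : Tendsto Z l (𝓝 0))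
    {e : (Fin n → ℝ) → ℝ} (hea : AnalyticAt ℝ e 0) (he : NC (coords n) e)
    {c : ℕ → (Fin n → ℝ) → ℝ} (hc0 : ∀ i < m, c i 0 = 0)
    (hcN : ∀ i < m, NCZ (coords n) (c i))
    (hcd : ∀ i < m, ∀ j < m, NCZ (coords n) (fun x =>
      c i x ^ ((m + 1).factorial / (m + 1 - i)) - c j x ^ ((m + 1).factorial / (m + 1 - j))))
    {u : (Fin n → ℝ) × ℝ → ℝ} (hu : AnalyticAt ℝ u 0) (hu0 : u 0 ≠ 0)
    {G : (Fin n → ℝ) × ℝ → ℝ} (hG : ∀ᶠ p in 𝓝 (0 : (Fin n → ℝ) × ℝ), G p =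
      ∑ i ∈ Finset.range m, c i p.1 * p.2 ^ i + p.2 ^ (m + 1) * u p) :
    ∃ (φ : (Fin n → ℝ) × ℝ → (Fin n → ℝ) × ℝ) (V : ι → (Fin n → ℝ) × ℝ),
      Lift l (fun i => (X i, Z i)) φ V ∧ NCZ (pcoords n) (fun p => e (φ p).1 * G (φ p)) := by
  classical
  have hfst : Tendsto (fun p : (Fin n → ℝ) × ℝ => p.1) (𝓝 0) (𝓝 0) := continuous_fst.tendsto _
  by_cases hall : ∀ i < m, ∀ᶠ x in 𝓝 (0 : Fin n → ℝ), c i x = 0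
  · refine ⟨id, _, ⟨analyticAt_id, rfl, hX.prodMk_nhds hZ, Eventually.of_forall fun _ => rfl⟩,
      Or.inl ?_⟩
    refine ((NC.fst he).mul ((NC.snd.pow (m + 1)).mul (NC.unit hu hu0))).congr ?_
    have : ∀ᶠ p in 𝓝 (0 : (Fin n → ℝ) × ℝ), ∀ i ∈ Finset.range m, c i p.1 = 0 :=
      (Finset.eventually_all _).2 fun i hi => hfst.eventually (hall i (Finset.mem_range.1 hi))
    filter_upwards [this, hG] with p h1 h2
    simp only [id]
    rw [h2, Finset.sum_eq_zero fun i hi => by rw [h1 i hi, zero_mul], zero_add]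
  -- uniform description of the coefficients, with `v i = 0` for the vanishing ones
  have hdesc : ∀ i, ∃ (α : Fin n → ℕ) (v : (Fin n → ℝ) → ℝ), i < m → (AnalyticAt ℝ v 0 ∧
      (v 0 ≠ 0 ∨ v = fun _ => 0) ∧ ∀ᶠ x in 𝓝 (0 : Fin n → ℝ), c i x = v x * ∏ k, x k ^ α k) := by
    intro i
    by_cases hi : i < m
    · rcases hcN i hi with ⟨α, v, hv, hv0, h⟩ | h
      · exact ⟨α, v, fun _ => ⟨hv, Or.inl hv0, h⟩⟩
      · exact ⟨0, fun _ => 0, fun _ => ⟨analyticAt_const, Or.inr rfl, by simpa using h⟩⟩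
    · exact ⟨0, fun _ => 0, fun h => absurd h hi⟩
  choose α v hdesc using hdesc
  set M := (m + 1).factorial with hM
  have hMpos : M ≠ 0 := Nat.factorial_ne_zero _
  have hdiv : ∀ i, i < m → M / (m + 1 - i) * (m + 1 - i) = M := fun i hi =>
    Nat.div_mul_cancel (Nat.dvd_factorial (by omega) (by omega))
  set ρ : ℕ → Fin n → ℕ := fun i k => M / (m + 1 - i) * α i k with hρ
  set I : Finset ℕ := (Finset.range m).filter fun i => v i 0 ≠ 0 with hI
  have hIne : I.Nonempty := by
    by_contra hemp
    apply hall
    intro i hi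
    obtain ⟨_, hv, h⟩ := hdesc i hi
    rcases hv with hv | hv
    · exact absurd ⟨i, by simp [hI, hi, hv]⟩ hemp
    · simpa [hv] using h
  obtain ⟨i₀, hi₀I, hmin⟩ := Finset.exists_min_image I (fun i => ∑ k, ρ i k) hIne
  have hi₀ : i₀ < m := by simp [hI] at hi₀I; exact hi₀I.1
  have hvi₀ : v i₀ 0 ≠ 0 := by simp [hI] at hi₀I; exact hi₀I.2
  have hpow : ∀ i < m, ∀ᶠ x in 𝓝 (0 : Fin n → ℝ), c i x ^ (M / (m + 1 - i)) =
      v i x ^ (M / (m + 1 - i)) * ∏ k, x k ^ ρ i k := by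
    intro i hi
    filter_upwards [(hdesc i hi).2.2] with x hx
    rw [hx, mul_pow, ← Finset.prod_pow]
    congr 1
    refine Finset.prod_congr rfl fun k _ => ?_
    rw [← pow_mul, mul_comm]
  have hle : ∀ i ∈ I, ρ i₀ ≤ ρ i := by
    intro i hi
    have him : i < m := by simp [hI] at hi; exact hi.1
    have hvi : v i 0 ≠ 0 := by simp [hI] at hi; exact hi.2
    rcases monomials_comparable ((hdesc i₀ hi₀).1.pow _) (pow_ne_zero _ hvi₀)
      ((hdesc i him).1.pow _) (pow_ne_zero _ hvi) (hpow i₀ hi₀) (hpow i him)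
      (hcd i₀ hi₀ i him) with h | h
    · exact h
    · have heq : ∀ k ∈ Finset.univ, ρ i k = ρ i₀ k :=
        (Finset.sum_eq_sum_iff_of_le fun k _ => h k).1
          (le_antisymm (Finset.sum_le_sum fun k _ => h k) (hmin i hi))
      exact fun k => (heq k (Finset.mem_univ k)).ge
  obtain ⟨ε, Y, hε, hL⟩ := power_lift l hX hMpos
  set P : (Fin n → ℝ) → Fin n → ℝ := fun y k => ε k * y k ^ M with hP
  set a : ℕ → (Fin n → ℝ) → ℝ := fun i y => v i (P y) * ((∏ k, ε k ^ α i k) *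
    ∏ k, y k ^ ((m + 1 - i) * (ρ i k - ρ i₀ k))) with ha
  have hca : ∀ i < m, ∀ᶠ y in 𝓝 (0 : Fin n → ℝ),
      c i (P y) = a i y * (∏ k, y k ^ ρ i₀ k) ^ (m + 1 - i) := by
    intro i hi
    obtain ⟨_, hv, h⟩ := hdesc i hi
    filter_upwards [hL.tendsto_map.eventually h] with y hy
    rw [hy]
    simp only [ha]
    rcases hv with hv | hv
    · have hle' := hle i (by simp [hI, hi, hv])
      rw [mul_assoc, mul_assoc, ← Finset.prod_pow, ← Finset.prod_mul_distrib,
        ← Finset.prod_mul_distrib]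
      congr 1
      refine Finset.prod_congr rfl fun k _ => ?_
      have hk : M * α i k = (m + 1 - i) * (ρ i k - ρ i₀ k) + ρ i₀ k * (m + 1 - i) := by
        have h1 : ρ i k * (m + 1 - i) = M * α i k := by
          simp only [hρ]
          rw [mul_right_comm, hdiv i hi]
        rw [← h1, mul_comm (m + 1 - i), ← add_mul, Nat.sub_add_cancel (hle' k)]
      rw [hP, mul_pow, ← pow_mul, ← pow_mul, hk, pow_add]
    · simp [hv]
  have hG' : ∀ᶠ p in 𝓝 (0 : (Fin n → ℝ) × ℝ), G (P p.1, p.2) =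
      ∑ i ∈ Finset.range m, a i p.1 * (∏ k, p.1 k ^ ρ i₀ k) ^ (m + 1 - i) * p.2 ^ i +
        p.2 ^ (m + 1) * u (P p.1, p.2) := by
    have h1 : ∀ᶠ p in 𝓝 (0 : (Fin n → ℝ) × ℝ), ∀ i ∈ Finset.range m,
        c i (P p.1) = a i p.1 * (∏ k, p.1 k ^ ρ i₀ k) ^ (m + 1 - i) :=
      (Finset.eventually_all _).2 fun i hi => hfst.eventually (hca i (Finset.mem_range.1 hi))
    filter_upwards [h1, (hL.prod hZ).tendsto_map.eventually hG] with p h2 h3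
    rw [h3]
    congr 1
    exact Finset.sum_congr rfl fun i hi => by rw [h2 i hi]
  have hai₀ : a i₀ 0 ≠ 0 := by
    simp only [ha, tsub_self, mul_zero, pow_zero, Finset.prod_const_one, mul_one]
    rw [hL.map_zero]
    exact mul_ne_zero hvi₀ (Finset.prod_ne_zero_iff.2 fun k _ => pow_ne_zero _ (hε k))
  have hγ : ∏ k, (0 : ℝ) ^ ρ i₀ k = 0 := by
    have h1 := (hca i₀ hi₀).self_of_nhds
    rw [hL.map_zero, hc0 i₀ hi₀] at h1
    have h2 := (mul_eq_zero.1 h1.symm).resolve_left hai₀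
    exact pow_eq_zero_iff (by omega) |>.1 h2
  have heP : NC (coords n) (fun y => e (P y)) :=
    NC.comp he hL.analytic hL.map_zero fun k =>
      (NC.unit analyticAt_const (hε k)).mul ((NC.coord (c := coords n) k).pow M)
  have hLZ := hL.prod hZ
  obtain ⟨φ, V, hL', hN⟩ := reg_of_monomial IH hL.tendsto hZ (hL.analyticAt_comp hea) heP hγ
    (fun i hi => (hL.analyticAt_comp (hdesc i hi).1).mul
      (analyticAt_const.mul (analyticAt_monomial _ 0))) hi₀ hai₀ (hLZ.analyticAt_comp hu)
    (by rw [show P (0 : (Fin n → ℝ) × ℝ).1 = 0 from hL.map_zero]; exact hu0) hG'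
  exact ⟨_, V, hLZ.comp hL', hN⟩

/-- The inductive step in the order of regularity. -/
lemma reg_all {ι : Type*} {l : Ultrafilter ι} {n : ℕ} (hLU : LU l n) (d : ℕ) : Reg l n d := by
  induction d using Nat.strong_induction_on with
  | _ d IH =>
  intro s X Z e g hs hs0 hX hZ hea hga ho
  rcases d with _ | m
  · -- a germ regular of order `0` is a unit
    obtain ⟨φ, W, hL, hN⟩ := hLU X e hX hea
    have hLZ := hL.prod hZ
    refine ⟨_, _, hLZ, ?_⟩
    have hg0 : g 0 ≠ 0 := by
      have := ho.self_of_nhds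
      rw [pow_zero, one_mul] at this
      exact this.trans_ne hs0
    rcases hN with hN | hN
    · exact Or.inl ((NC.fst hN).mul (NC.unit (hLZ.analyticAt_comp hga)
        (by rw [hLZ.map_zero]; exact hg0)))
    · right
      have hfst : Tendsto (fun p : (Fin n → ℝ) × ℝ => p.1) (𝓝 0) (𝓝 0) :=
        continuous_fst.tendsto _
      filter_upwards [hfst.eventually hN] with p hp
      rw [hp, zero_mul]
  · obtain ⟨b, c, u, hb, hb0, hc, hc0, hu, hu0, hexp⟩ := tschirnhausen hs hs0 m hga ho
    have hbX : Tendsto (fun i => b (X i)) l (𝓝 0) := by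
      have := hb.continuousAt.tendsto.comp hX
      rwa [hb0] at this
    have hZ' : Tendsto (fun i => Z i - b (X i)) l (𝓝 0) := by simpa using hZ.sub hbX
    have hT : Lift l (fun i => (X i, Z i)) (fun p : (Fin n → ℝ) × ℝ => (p.1, b p.1 + p.2))
        (fun i => (X i, Z i - b (X i))) :=
      { analytic := analyticAt_fst.prod ((analyticAt_comp_fst hb).add analyticAt_snd)
        map_zero := by simp [hb0]
        tendsto := hX.prodMk_nhds hZ'
        eq := Eventually.of_forall fun i => by simp }
    set M := (m + 1).factorial with hM
    let h : Option (Fin m ⊕ Fin m × Fin m) → (Fin n → ℝ) → ℝ := fun o => match o with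
      | none => e
      | some (Sum.inl i) => c i
      | some (Sum.inr (i, j)) => fun x => c i x ^ (M / (m + 1 - i)) - c j x ^ (M / (m + 1 - j))
    have hh : ∀ o ∈ Finset.univ, AnalyticAt ℝ (h o) 0 := by
      rintro (_ | i | ⟨i, j⟩) _
      · exact hea
      · exact hc i
      · exact ((hc i).pow _).sub ((hc j).pow _)
    obtain ⟨φ, W, hL, hN⟩ := hLU.simultaneous _ Finset.univ rfl X h hX hh
    have hLZ := hL.prod hZ'
    rcases hN none (Finset.mem_univ _) with he | he
    · obtain ⟨ψ, V, hL', hN'⟩ := reg_of_prepared (e := fun x => e (φ x)) IH hL.tendsto hZ'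
        (hL.analyticAt_comp hea) he
        (c := fun i x => c i (φ x)) (fun i hi => by rw [hL.map_zero]; exact hc0 i hi)
        (fun i hi => hN (some (Sum.inl ⟨i, hi⟩)) (Finset.mem_univ _))
        (fun i hi j hj => hN (some (Sum.inr (⟨i, hi⟩, ⟨j, hj⟩))) (Finset.mem_univ _))
        (hLZ.analyticAt_comp hu) (by rw [hLZ.map_zero]; exact hu0)
        (hLZ.tendsto_map.eventually hexp)
      exact ⟨_, V, hT.comp (hLZ.comp hL'), hN'⟩
    · refine ⟨_, _, hT.comp hLZ, Or.inr ?_⟩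
      have hfst : Tendsto (fun p : (Fin n → ℝ) × ℝ => p.1) (𝓝 0) (𝓝 0) :=
        continuous_fst.tendsto _
      filter_upwards [hfst.eventually he] with p hp
      change e (φ p.1) = 0 at hp
      rw [hp, zero_mul]

lemma LU.zero {ι : Type*} (l : Ultrafilter ι) : LU l 0 := by
  intro X f hX hf
  refine ⟨id, X, ⟨analyticAt_id, rfl, hX, Eventually.of_forall fun _ => rfl⟩, ?_⟩
  by_cases h : f 0 = 0
  · exact Or.inr (Eventually.of_forall fun w => by rw [Subsingleton.elim w 0]; exact h)
  · exact Or.inl (NC.unit hf h)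

/-- The passage from `n` to `n + 1` variables: a nonzero germ is regular in the last variable after
a linear change of coordinates. -/
lemma LU.succ {ι : Type*} {l : Ultrafilter ι} {n : ℕ} (hLU : LU l n) : LU l (n + 1) := by
  intro X f hX hf
  by_cases hz : ∀ᶠ x in 𝓝 (0 : Fin (n + 1) → ℝ), f x = 0
  · exact ⟨id, X, ⟨analyticAt_id, rfl, hX, Eventually.of_forall fun _ => rfl⟩, Or.inr hz⟩
  -- a direction along which the germ does not vanish identically
  obtain ⟨r, hr, hB⟩ := Metric.eventually_nhds_iff_ball.1 hf.eventually_analyticAt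
  obtain ⟨v, hv, hfv⟩ : ∃ v ∈ Metric.ball (0 : Fin (n + 1) → ℝ) r, f v ≠ 0 := by
    by_contra! hcon
    exact hz (by filter_upwards [Metric.ball_mem_nhds _ hr] with x hx using hcon x hx)
  have hline : AnalyticAt ℝ (fun t : ℝ => f (t • v)) 0 :=
    AnalyticAt.fun_comp (g := f) (f := fun t : ℝ => t • v) (by simpa using hf)
      (analyticAt_id.smul analyticAt_const)
  have hnz : ¬ ∀ᶠ t in 𝓝 (0 : ℝ), f (t • v) = 0 := by
    intro hcon
    have hU : AnalyticOnNhd ℝ (fun t : ℝ => f (t • v)) (Set.Icc 0 1) := by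
      intro t ht
      refine AnalyticAt.fun_comp (g := f) (f := fun t : ℝ => t • v) (hB _ ?_)
        (analyticAt_id.smul analyticAt_const)
      rw [mem_ball_zero_iff] at hv ⊢
      rw [norm_smul, Real.norm_eq_abs, abs_of_nonneg ht.1]
      exact lt_of_le_of_lt (mul_le_of_le_one_left (norm_nonneg _) ht.2) hv
    have := hU.eqOn_zero_of_preconnected_of_eventuallyEq_zero isPreconnected_Icc
      (Set.left_mem_Icc.2 zero_le_one) hcon (Set.right_mem_Icc.2 zero_le_one)
    exact hfv (by simpa using this)
  obtain ⟨d, s, hs, hs0, hord⟩ :=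
    (hline.exists_eventuallyEq_pow_smul_nonzero_iff).2 hnz
  by_cases hf0 : f 0 = 0
  swap
  · exact ⟨id, X, ⟨analyticAt_id, rfl, hX, Eventually.of_forall fun _ => rfl⟩,
      Or.inl (NC.unit hf hf0)⟩
  have hv0 : v ≠ 0 := by
    rintro rfl
    exact hfv hf0
  obtain ⟨A, hA⟩ := SeparatingDual.exists_continuousLinearEquiv_apply_eq (R := ℝ)
    (x := (Pi.single 0 1 : Fin (n + 1) → ℝ)) (y := v) (by simp) hv0
  have hσ : AnalyticAt ℝ (fun p : (Fin n → ℝ) × ℝ => A (Fin.cons p.2 p.1)) 0 := by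
    refine AnalyticAt.fun_comp (g := A) ((A : (Fin (n + 1) → ℝ) →L[ℝ] (Fin (n + 1) → ℝ)).analyticAt _) ?_
    refine analyticAt_pi_iff.2 fun k => Fin.cases ?_ (fun k => ?_) k
    · exact analyticAt_snd
    · exact analyticAt_fst_apply k 0
  have hcons0 : (Fin.cons (0 : ℝ) (0 : Fin n → ℝ) : Fin (n + 1) → ℝ) = 0 := by
    ext k; refine Fin.cases rfl (fun _ => rfl) k
  have hτ : AnalyticAt ℝ (fun w : Fin (n + 1) → ℝ => ((Fin.tail w : Fin n → ℝ), w 0)) 0 := by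
    refine AnalyticAt.prod (analyticAt_pi_iff.2 fun k => ?_) (analyticAt_coord 0 0)
    exact analyticAt_coord k.succ 0
  have hX' : Tendsto (fun i => A.symm (X i)) l (𝓝 0) := by
    simpa [Function.comp_def] using (A.symm.continuous.tendsto 0).comp hX
  have htail : Tendsto (fun i => (Fin.tail (A.symm (X i)) : Fin n → ℝ)) l (𝓝 0) :=
    tendsto_pi_nhds.2 fun k => (tendsto_pi_nhds.1 hX') k.succ
  have hhead : Tendsto (fun i => A.symm (X i) 0) l (𝓝 0) := (tendsto_pi_nhds.1 hX') 0
  have hL : Lift l X (fun p : (Fin n → ℝ) × ℝ => A (Fin.cons p.2 p.1))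
      (fun i => (Fin.tail (A.symm (X i)), A.symm (X i) 0)) :=
    { analytic := hσ
      map_zero := by
        show A (Fin.cons (0 : ℝ) (0 : Fin n → ℝ)) = 0
        rw [hcons0, map_zero]
      tendsto := htail.prodMk_nhds hhead
      eq := Eventually.of_forall fun i => by
        simp only [Fin.cons_self_tail, ContinuousLinearEquiv.apply_symm_apply] }
  obtain ⟨φ, V, hLV, hN⟩ := reg_all hLU d s _ _ (fun _ => 1)
    (fun p : (Fin n → ℝ) × ℝ => f (A (Fin.cons p.2 p.1))) hs hs0 htail hhead analyticAt_const
    (hL.analyticAt_comp hf) (by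
      filter_upwards [hord] with z hz
      rw [sub_zero, smul_eq_mul] at hz
      rw [← hz]
      have : (Fin.cons z (0 : Fin n → ℝ) : Fin (n + 1) → ℝ) = z • Pi.single 0 1 := by
        ext k; refine Fin.cases (by simp) (fun k => by simp) k
      show f (A (Fin.cons z (0 : Fin n → ℝ))) = f (z • v)
      rw [this, map_smul, hA])
  have hLτ : Lift l V (fun w : Fin (n + 1) → ℝ => ((Fin.tail w : Fin n → ℝ), w 0))
      (fun i => Fin.cons (V i).2 (V i).1) :=
    { analytic := hτ
      map_zero := rfl
      tendsto := by
        refine tendsto_pi_nhds.2 fun k => Fin.cases ?_ (fun k => ?_) k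
        · exact (continuous_snd.tendsto _).comp hLV.tendsto
        · exact (tendsto_pi_nhds.1 ((continuous_fst.tendsto _).comp hLV.tendsto)) k
      eq := Eventually.of_forall fun i => by simp }
  refine ⟨_, _, (hL.comp hLV).comp hLτ, ?_⟩
  rcases hN with hN | hN
  · left
    refine (NC.comp (c' := coords (n + 1)) hN hτ rfl fun k => ?_).congr
      (Eventually.of_forall fun w => (one_mul _).symm)
    refine (NC.coord (c := coords (n + 1)) k).congr (Eventually.of_forall fun w => ?_)
    simp only [pcoords, Fin.cons_self_tail]
  · right
    filter_upwards [hLτ.tendsto_map.eventually hN] with w hw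
    rwa [one_mul] at hw

lemma LU.all {ι : Type*} (l : Ultrafilter ι) (n : ℕ) : LU l n := by
  induction n with
  | zero => exact LU.zero l
  | succ n ih => exact ih.succ

/-! ### The Łojasiewicz gradient inequality -/

/-- Euler's relation for `h = u w ^ α`: differentiating in the direction of the `k`-th coordinate,
scaled by that coordinate. -/
lemma euler_relation {n : ℕ} {u h : (Fin n → ℝ) → ℝ} {α : Fin n → ℕ} {w : Fin n → ℝ}
    (hu : DifferentiableAt ℝ u w) (hh : DifferentiableAt ℝ h w)
    (he : ∀ᶠ x in 𝓝 w, h x = u x * ∏ k, x k ^ α k) (k : Fin n) :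
    w k * fderiv ℝ h w (Pi.single k 1) =
      (∏ j, w j ^ α j) * (w k * fderiv ℝ u w (Pi.single k 1) + α k * u w) := by
  have hγ : HasDerivAt (fun t : ℝ => w + (t * w k) • (Pi.single k 1 : Fin n → ℝ))
      (w k • (Pi.single k 1 : Fin n → ℝ)) 0 := by
    have := (((hasDerivAt_id (0 : ℝ)).mul_const (w k)).smul_const
      (Pi.single k 1 : Fin n → ℝ)).const_add w
    simpa using this
  have hγ0 : w + ((0 : ℝ) * w k) • (Pi.single k 1 : Fin n → ℝ) = w := by simp
  have hmon : ∀ t : ℝ, ∏ j, (w + (t * w k) • (Pi.single k 1 : Fin n → ℝ)) j ^ α j =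
      (1 + t) ^ α k * ∏ j, w j ^ α j := by
    intro t
    rw [← Finset.mul_prod_erase Finset.univ _ (Finset.mem_univ k),
      ← Finset.mul_prod_erase Finset.univ (fun j => w j ^ α j) (Finset.mem_univ k), ← mul_assoc]
    congr 1
    · rw [← mul_pow]; congr 1; simp; ring
    · refine Finset.prod_congr rfl fun j hj => ?_
      simp [Finset.ne_of_mem_erase hj]
  have h1 : HasDerivAt (fun t : ℝ => h (w + (t * w k) • (Pi.single k 1 : Fin n → ℝ)))
      (fderiv ℝ h w (w k • (Pi.single k 1 : Fin n → ℝ))) 0 :=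
    HasFDerivAt.comp_hasDerivAt (0 : ℝ) (by rw [hγ0]; exact hh.hasFDerivAt) hγ
  have h2 : HasDerivAt (fun t : ℝ => u (w + (t * w k) • (Pi.single k 1 : Fin n → ℝ)))
      (fderiv ℝ u w (w k • (Pi.single k 1 : Fin n → ℝ))) 0 :=
    HasFDerivAt.comp_hasDerivAt (0 : ℝ) (by rw [hγ0]; exact hu.hasFDerivAt) hγ
  have h3 : HasDerivAt (fun t : ℝ => (1 + t) ^ α k * ∏ j, w j ^ α j)
      (α k * ∏ j, w j ^ α j) 0 := by
    have := ((((hasDerivAt_id (0 : ℝ)).const_add 1).fun_pow (α k)).mul_const (∏ j, w j ^ α j))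
    simpa using this
  have h4 := h2.mul h3
  have h5 := h1.congr_of_eventuallyEq (f₁ := fun t : ℝ =>
      u (w + (t * w k) • (Pi.single k 1 : Fin n → ℝ)) * ((1 + t) ^ α k * ∏ j, w j ^ α j)) (by
    have hc : Tendsto (fun t : ℝ => w + (t * w k) • (Pi.single k 1 : Fin n → ℝ)) (𝓝 0) (𝓝 w) := by
      have := hγ.continuousAt.tendsto
      rwa [hγ0] at this
    filter_upwards [hc.eventually he] with t ht
    rw [ht, hmon])
  have h6 := h5.unique h4
  simp only [map_smul, smul_eq_mul, zero_mul, zero_smul, add_zero, one_pow, one_mul] at h6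
  rw [h6]
  ring

/-- The gradient inequality for a monomial times a unit. -/
lemma lojasiewicz_NC {n : ℕ} {h : (Fin n → ℝ) → ℝ} (hN : NC (coords n) h) (h0 : h 0 = 0) :
    ∃ (θ C : ℝ), 0 < θ ∧ θ < 1 ∧ 0 < C ∧
      ∀ᶠ w in 𝓝 (0 : Fin n → ℝ), |h w| ^ θ ≤ C * ‖fderiv ℝ h w‖ := by
  obtain ⟨α, u, hu, hu0, he⟩ := hN
  set N := ∑ k, α k with hNdef
  have hNpos : N ≠ 0 := by
    intro hN0
    have h1 := he.self_of_nhds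
    have h2 : ∀ k, α k = 0 := fun k => (Finset.sum_eq_zero_iff.1 hN0) k (Finset.mem_univ k)
    simp only [h2, pow_zero, Finset.prod_const_one, mul_one] at h1
    exact hu0 (h1.symm.trans h0)
  have hNr : (0 : ℝ) < N := by exact_mod_cast Nat.pos_of_ne_zero hNpos
  have hmona : AnalyticAt ℝ (fun w : Fin n → ℝ => ∏ k, w k ^ α k) 0 := analyticAt_monomial α 0
  have hha : AnalyticAt ℝ h 0 := (hu.mul hmona).congr (by
    filter_upwards [he] with w hw using hw.symm)
  have hmon0 : ∏ k, (0 : Fin n → ℝ) k ^ α k = 0 := by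
    have h1 := he.self_of_nhds
    rw [h0] at h1
    exact (mul_eq_zero.1 h1.symm).resolve_left hu0
  set c : ℝ := |u 0| / 2 with hc
  have hcpos : 0 < c := by have := abs_pos.2 hu0; positivity
  set θ : ℝ := N / (N + 1) with hθ
  have hθpos : 0 < θ := by positivity
  refine ⟨θ, (2 * |u 0|) ^ θ / c, hθpos, ?_, ?_, ?_⟩
  · rw [hθ, div_lt_one (by positivity)]; linarith
  · have := abs_pos.2 hu0; positivity
  have hk : ∀ k : Fin n, α k ≠ 0 → ∀ᶠ w in 𝓝 (0 : Fin n → ℝ),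
      c < |w k * fderiv ℝ u w (Pi.single k 1) + α k * u w| := by
    intro k hαk
    have hcont : ContinuousAt (fun w : Fin n → ℝ =>
        |w k * fderiv ℝ u w (Pi.single k 1) + α k * u w|) 0 := by
      have h1 := hu.fderiv.continuousAt
      have h2 := hu.continuousAt
      exact (((continuous_apply k).continuousAt.mul (h1.clm_apply continuousAt_const)).add
        (continuousAt_const.mul h2)).abs
    refine hcont.eventually (lt_mem_nhds ?_)
    simp only [Pi.zero_apply, zero_mul, zero_add, abs_mul, Nat.abs_cast]
    have h1 : (1 : ℝ) ≤ α k := by exact_mod_cast Nat.one_le_iff_ne_zero.2 hαk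
    have := abs_pos.2 hu0
    rw [hc]
    nlinarith
  have hk' : ∀ᶠ w in 𝓝 (0 : Fin n → ℝ), ∀ k, α k ≠ 0 →
      c < |w k * fderiv ℝ u w (Pi.single k 1) + α k * u w| := by
    rw [eventually_all]
    intro k
    by_cases h : α k = 0
    · simp [h]
    · filter_upwards [hk k h] with w hw _ using hw
  have hub : ∀ᶠ w in 𝓝 (0 : Fin n → ℝ), |u w| < 2 * |u 0| := by
    refine hu.continuousAt.abs.eventually (gt_mem_nhds ?_)
    have := abs_pos.2 hu0
    linarith
  have hmb : ∀ᶠ w in 𝓝 (0 : Fin n → ℝ), |∏ k, w k ^ α k| < 1 := by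
    refine hmona.continuousAt.abs.eventually (gt_mem_nhds ?_)
    simp only [hmon0, abs_zero, zero_lt_one]
  filter_upwards [he, hk', hub, hmb, eventually_eventually_nhds.2 he, hu.eventually_analyticAt,
    hha.eventually_analyticAt] with w h1 h2 h3 h4 h5 h6 h7
  set A := |∏ k, w k ^ α k| with hA
  set D := ‖fderiv ℝ h w‖ with hD
  have hD0 : 0 ≤ D := norm_nonneg _
  have hhA : |h w| = |u w| * A := by rw [h1, abs_mul]
  by_cases hA0 : A = 0
  · rw [hhA, hA0, mul_zero, Real.zero_rpow hθpos.ne']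
    positivity
  have hApos : 0 < A := lt_of_le_of_ne (abs_nonneg _) (Ne.symm hA0)
  have hkey : ∀ k, (c * A) ^ α k ≤ (|w k| * D) ^ α k := by
    intro k
    by_cases hαk : α k = 0
    · simp [hαk]
    refine pow_le_pow_left₀ (by positivity) ?_ _
    have h8 := euler_relation h6.differentiableAt h7.differentiableAt h5 k
    have h9 : |fderiv ℝ h w (Pi.single k 1)| ≤ D := by
      have := (fderiv ℝ h w).le_opNorm (Pi.single k 1)
      rw [Pi.norm_single, norm_one, mul_one, Real.norm_eq_abs] at this
      exact this
    calc c * A ≤ |w k * fderiv ℝ u w (Pi.single k 1) + α k * u w| * A :=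
          mul_le_mul_of_nonneg_right (h2 k hαk).le hApos.le
      _ = |w k| * |fderiv ℝ h w (Pi.single k 1)| := by
          rw [← abs_mul (w k), h8, abs_mul, mul_comm]
      _ ≤ |w k| * D := mul_le_mul_of_nonneg_left h9 (abs_nonneg _)
  have hprod : (c * A) ^ N ≤ A * D ^ N := by
    have h8 := Finset.prod_le_prod (s := Finset.univ)
      (fun k _ => by positivity : ∀ k ∈ Finset.univ, 0 ≤ (c * A) ^ α k) (fun k _ => hkey k)
    rw [Finset.prod_pow_eq_pow_sum] at h8
    refine h8.trans (le_of_eq ?_)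
    simp only [mul_pow]
    rw [Finset.prod_mul_distrib, Finset.prod_pow_eq_pow_sum, hA, Finset.abs_prod]
    simp only [abs_pow]
    rfl
  have hDA : c * A ^ (((N : ℝ) - 1) / N) ≤ D := by
    refine (pow_le_pow_iff_left₀ (by positivity) hD0 hNpos).1 ?_
    have h8 : (A ^ (((N : ℝ) - 1) / N)) ^ N * A = A ^ N := by
      rw [← Real.rpow_natCast, ← Real.rpow_mul hApos.le, div_mul_cancel₀ _ hNr.ne',
        Real.rpow_sub_one hApos.ne', Real.rpow_natCast, div_mul_cancel₀ _ hApos.ne']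
    rw [mul_pow]
    refine le_of_mul_le_mul_right ?_ hApos
    rw [mul_assoc, h8, ← mul_pow, mul_comm (D ^ N)]
    exact hprod
  have hexp : A ^ θ ≤ A ^ (((N : ℝ) - 1) / N) := by
    refine Real.rpow_le_rpow_of_exponent_ge hApos h4.le ?_
    rw [hθ, div_le_div_iff₀ hNr (by positivity)]
    nlinarith
  calc |h w| ^ θ ≤ (2 * |u 0| * A) ^ θ := by
        rw [hhA]
        exact Real.rpow_le_rpow (by positivity)
          (mul_le_mul_of_nonneg_right h3.le hApos.le) hθpos.le
    _ = (2 * |u 0|) ^ θ * A ^ θ := Real.mul_rpow (by positivity) hApos.le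
    _ ≤ (2 * |u 0|) ^ θ * (D / c) := by
        refine mul_le_mul_of_nonneg_left (hexp.trans ?_) (by positivity)
        rw [le_div_iff₀ hcpos, mul_comm]
        exact hDA
    _ = (2 * |u 0|) ^ θ / c * D := by ring

/-- The gradient inequality along an ultrafilter, obtained by pulling back to a chart in which the
germ has normal crossings. -/
lemma lojasiewicz_ultrafilter {ι : Type*} (l : Ultrafilter ι) {n : ℕ} {g : (Fin n → ℝ) → ℝ}
    (hg : AnalyticAt ℝ g 0) (h0 : g 0 = 0) {X : ι → Fin n → ℝ} (hX : Tendsto X l (𝓝 0)) :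
    ∃ (θ C : ℝ), 0 < θ ∧ θ < 1 ∧ 0 < C ∧
      ∀ᶠ i in (l : Filter ι), |g (X i)| ^ θ ≤ C * ‖fderiv ℝ g (X i)‖ := by
  obtain ⟨φ, W, hL, hN⟩ := LU.all l n X g hX hg
  rcases hN with hN | hN
  · obtain ⟨θ, C, hθ, hθ1, hC, h⟩ := lojasiewicz_NC hN (by rw [hL.map_zero, h0])
    set K := ‖fderiv ℝ φ 0‖ + 1 with hK
    have hKpos : 0 < K := by positivity
    have hb : ∀ᶠ w in 𝓝 (0 : Fin n → ℝ), ‖fderiv ℝ φ w‖ < K :=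
      hL.analytic.fderiv.continuousAt.norm.eventually (gt_mem_nhds (by simp [hK]))
    refine ⟨θ, C * K, hθ, hθ1, by positivity, ?_⟩
    filter_upwards [hL.eq, hL.tendsto.eventually h, hL.tendsto.eventually hb,
      hL.tendsto.eventually hL.analytic.eventually_analyticAt,
      hL.tendsto.eventually (hL.tendsto_map.eventually hg.eventually_analyticAt)]
      with i h1 h2 h3 h4 h5
    rw [← h1]
    refine h2.trans ?_
    rw [mul_assoc]
    refine mul_le_mul_of_nonneg_left ?_ hC.le
    have h6 : fderiv ℝ (fun w => g (φ w)) (W i) =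
        (fderiv ℝ g (φ (W i))).comp (fderiv ℝ φ (W i)) :=
      fderiv_comp (W i) h5.differentiableAt h4.differentiableAt
    rw [h6, mul_comm K]
    exact (ContinuousLinearMap.opNorm_comp_le _ _).trans
      (mul_le_mul_of_nonneg_left h3.le (norm_nonneg _))
  · refine ⟨1 / 2, 1, by norm_num, by norm_num, one_pos, ?_⟩
    filter_upwards [hL.eq, hL.tendsto.eventually hN] with i h1 h2
    rw [h1] at h2
    rw [h2, abs_zero, Real.zero_rpow (by norm_num)]
    positivity

/-- The Łojasiewicz gradient inequality at the origin. -/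
lemma lojasiewicz_zero {n : ℕ} {g : (Fin n → ℝ) → ℝ}
    (hg : AnalyticAt ℝ g 0) (h0 : g 0 = 0) :
    ∃ (θ C : ℝ), 1 / 2 < θ ∧ θ < 1 ∧ 0 < C ∧
      ∀ᶠ x in 𝓝 (0 : Fin n → ℝ), |g x| ^ θ ≤ C * ‖fderiv ℝ g x‖ := by
  by_contra! hcon
  have hτ : ∀ k : ℕ, 1 / 2 < (1 - 1 / ((k : ℝ) + 3)) ∧ (1 - 1 / ((k : ℝ) + 3)) < 1 := by
    intro k
    have h1 : 1 / ((k : ℝ) + 3) < 1 / 2 :=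
      one_div_lt_one_div_of_lt (by norm_num) (by have : (0 : ℝ) ≤ k := k.cast_nonneg; linarith)
    have h2 : 0 < 1 / ((k : ℝ) + 3) := by positivity
    constructor <;> linarith
  -- points violating the inequality with ever weaker exponents and constants
  have hpt : ∀ k : ℕ, ∃ x : Fin n → ℝ, ‖x‖ < 1 / ((k : ℝ) + 1) ∧
      ((k : ℝ) + 1) * ‖fderiv ℝ g x‖ < |g x| ^ (1 - 1 / ((k : ℝ) + 3)) := by
    intro k
    have h1 := hcon _ ((k : ℝ) + 1) (hτ k).1 (hτ k).2 (by positivity)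
    obtain ⟨x, hx, hx'⟩ := (h1.and_eventually
      (Metric.ball_mem_nhds (0 : Fin n → ℝ) (ε := 1 / ((k : ℝ) + 1)) (by positivity))).exists
    exact ⟨x, by simpa using hx', hx⟩
  choose X hXn hXv using hpt
  have hXt : Tendsto X atTop (𝓝 0) :=
    squeeze_zero_norm (fun k => (hXn k).le) tendsto_one_div_add_atTop_nhds_zero_nat
  have hle : ((hyperfilter ℕ : Ultrafilter ℕ) : Filter ℕ) ≤ atTop := by
    rw [← Nat.cofinite_eq_atTop]; exact hyperfilter_le_cofinite
  have hXl : Tendsto X (hyperfilter ℕ : Ultrafilter ℕ) (𝓝 0) := hXt.mono_left hle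
  obtain ⟨θ, C, hθ, hθ1, hC, h⟩ := lojasiewicz_ultrafilter (hyperfilter ℕ) hg h0 hXl
  have hsmall : ∀ᶠ k in ((hyperfilter ℕ : Ultrafilter ℕ) : Filter ℕ), |g (X k)| < 1 :=
    hXl.eventually (hg.continuousAt.abs.eventually (gt_mem_nhds (by simp [h0])))
  have hlarge : ∀ᶠ k : ℕ in ((hyperfilter ℕ : Ultrafilter ℕ) : Filter ℕ), C ≤ (k : ℝ) + 1 :=
    hle (by
      filter_upwards [tendsto_natCast_atTop_atTop.eventually_ge_atTop C] with k hk
      linarith)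
  have hexp : ∀ᶠ k : ℕ in ((hyperfilter ℕ : Ultrafilter ℕ) : Filter ℕ),
      θ ≤ 1 - 1 / ((k : ℝ) + 3) :=
    hle (by
      filter_upwards [tendsto_natCast_atTop_atTop.eventually_ge_atTop (1 / (1 - θ))] with k hk
      have h1 : 0 < 1 - θ := by linarith
      have h2 : 1 / ((k : ℝ) + 3) ≤ 1 - θ := by
        rw [div_le_iff₀ (by positivity)]
        rw [div_le_iff₀ h1] at hk
        nlinarith
      linarith)
  obtain ⟨k, h1, h2, h3, h4⟩ := (h.and (hsmall.and (hlarge.and hexp))).exists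
  have h5 := hXv k
  have h6 : |g (X k)| ≠ 0 := by
    intro h7
    rw [h7, Real.zero_rpow (by have := (hτ k).1; linarith)] at h5
    have : 0 ≤ ((k : ℝ) + 1) * ‖fderiv ℝ g (X k)‖ := by positivity
    linarith
  have h7 : |g (X k)| ^ (1 - 1 / ((k : ℝ) + 3)) ≤ |g (X k)| ^ θ :=
    Real.rpow_le_rpow_of_exponent_ge (lt_of_le_of_ne (abs_nonneg _) h6.symm) h2.le h4
  have h8 : C * ‖fderiv ℝ g (X k)‖ ≤ ((k : ℝ) + 1) * ‖fderiv ℝ g (X k)‖ :=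
    mul_le_mul_of_nonneg_right h3 (norm_nonneg _)
  linarith

/-- The Łojasiewicz gradient inequality. -/
theorem lojasiewicz {n : ℕ} {f : EuclideanSpace ℝ (Fin n) → ℝ} {y : EuclideanSpace ℝ (Fin n)}
    (hf : AnalyticAt ℝ f y) :
    ∃ (θ C : ℝ), 1 / 2 < θ ∧ θ < 1 ∧ 0 < C ∧
      ∀ᶠ x in 𝓝 y, |f x - f y| ^ θ ≤ C * ‖gradient f x‖ := by
  set L : (Fin n → ℝ) ≃L[ℝ] EuclideanSpace ℝ (Fin n) :=
    (EuclideanSpace.equiv (Fin n) ℝ).symm with hL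
  have hTa : ∀ w, HasFDerivAt (fun w : Fin n → ℝ => y + L w)
      (L : (Fin n → ℝ) →L[ℝ] EuclideanSpace ℝ (Fin n)) w := fun w =>
    (L.hasFDerivAt).const_add y
  have hTan : AnalyticAt ℝ (fun w : Fin n → ℝ => y + L w) 0 :=
    analyticAt_const.add ((L : (Fin n → ℝ) →L[ℝ] EuclideanSpace ℝ (Fin n)).analyticAt 0)
  have hg : AnalyticAt ℝ (fun w : Fin n → ℝ => f (y + L w) - f y) 0 :=
    (AnalyticAt.fun_comp (g := f) (f := fun w : Fin n → ℝ => y + L w) (by simpa using hf)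
      hTan).sub analyticAt_const
  obtain ⟨θ, C, hθ, hθ1, hC, h⟩ := lojasiewicz_zero hg (by simp)
  set K := ‖(L : (Fin n → ℝ) →L[ℝ] EuclideanSpace ℝ (Fin n))‖ + 1 with hK
  have hKpos : 0 < K := by positivity
  refine ⟨θ, C * K, hθ, hθ1, by positivity, ?_⟩
  have ht : Tendsto (fun x => L.symm (x - y)) (𝓝 y) (𝓝 0) := by
    have : ContinuousAt (fun x => L.symm (x - y)) y := by fun_prop
    simpa [ContinuousAt] using this
  filter_upwards [ht.eventually h, hf.eventually_analyticAt] with x h1 h2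
  have hx : y + L (L.symm (x - y)) = x := by simp
  have h3 : HasFDerivAt (fun w : Fin n → ℝ => f (y + L w) - f y)
      ((fderiv ℝ f x).comp (L : (Fin n → ℝ) →L[ℝ] EuclideanSpace ℝ (Fin n)))
      (L.symm (x - y)) := by
    refine HasFDerivAt.sub_const _ ?_
    exact HasFDerivAt.comp _ (by rw [hx]; exact h2.differentiableAt.hasFDerivAt) (hTa _)
  rw [h3.fderiv, hx] at h1
  have h4 : ‖gradient f x‖ = ‖fderiv ℝ f x‖ := by
    rw [gradient, LinearIsometryEquiv.norm_map]
  rw [h4]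
  refine h1.trans ?_
  rw [mul_assoc]
  refine mul_le_mul_of_nonneg_left ?_ hC.le
  rw [mul_comm K]
  refine (ContinuousLinearMap.opNorm_comp_le _ _).trans
    (mul_le_mul_of_nonneg_left (by simp [hK]) (norm_nonneg _))

/-! ### Convergence of the gradient flow -/

lemma le_of_deriv_nonpos {g g' : ℝ → ℝ} {a b : ℝ} (hd : ∀ t ∈ Set.Icc a b, HasDerivAt g (g' t) t)
    (hn : ∀ t ∈ Set.Icc a b, g' t ≤ 0) : ∀ s ∈ Set.Icc a b, g b ≤ g s := by
  intro s hs
  have : AntitoneOn g (Set.Icc a b) := by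
    refine antitoneOn_of_deriv_nonpos (convex_Icc a b)
      (fun t ht => (hd t ht).continuousAt.continuousWithinAt)
      (fun t ht => (hd t (interior_subset ht)).differentiableAt.differentiableWithinAt) ?_
    intro t ht
    rw [(hd t (interior_subset ht)).deriv]
    exact hn t (interior_subset ht)
  exact this hs ⟨hs.1.trans hs.2, le_rfl⟩ hs.2

section Flow

variable {n : ℕ} {f : EuclideanSpace ℝ (Fin n) → ℝ} {y : EuclideanSpace ℝ (Fin n)}
  {ξ : ℝ → EuclideanSpace ℝ (Fin n)}

/-- Energy identity along the flow. -/
lemma hasDerivAt_energy (hf : Differentiable ℝ f) {t : ℝ}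
    (hξ : HasDerivAt ξ (-(gradient f (ξ t))) t) :
    HasDerivAt (fun s => f (ξ s) - f y) (-‖gradient f (ξ t)‖ ^ 2) t := by
  have h1 := ((hf (ξ t)).hasGradientAt.hasFDerivAt.comp_hasDerivAt t hξ).sub_const (f y)
  refine h1.congr_deriv ?_
  rw [InnerProductSpace.toDual_apply_apply, inner_neg_right, real_inner_self_eq_norm_sq]

/-- As long as the trajectory stays where the Łojasiewicz inequality holds, the distance travelled
is controlled by the drop of `F ^ (1 - θ)`, where `F` is the energy excess. -/
lemma dist_le_drop (hf : Differentiable ℝ f) {θ C a b : ℝ} (hθ1 : θ < 1) (hC : 0 < C)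
    (hab : a ≤ b)
    (hflow : ∀ t ∈ Set.Icc a b, HasDerivAt ξ (-(gradient f (ξ t))) t)
    (hF : ∀ t ∈ Set.Icc a b, 0 < f (ξ t) - f y)
    (hL : ∀ t ∈ Set.Icc a b, (f (ξ t) - f y) ^ θ ≤ C * ‖gradient f (ξ t)‖) :
    ‖ξ b - ξ a‖ ≤ C / (1 - θ) * ((f (ξ a) - f y) ^ (1 - θ) - (f (ξ b) - f y) ^ (1 - θ)) := by
  have h1θ : 0 < 1 - θ := by linarith
  set F : ℝ → ℝ := fun t => f (ξ t) - f y with hFdef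
  have hB : ∀ t ∈ Set.Icc a b, HasDerivAt
      (fun t => C / (1 - θ) * (F a ^ (1 - θ) - F t ^ (1 - θ)))
      (C * (F t ^ (-θ) * ‖gradient f (ξ t)‖ ^ 2)) t := by
    intro t ht
    have h1 := (((hasDerivAt_energy (y := y) hf (hflow t ht)).rpow_const (p := 1 - θ)
      (Or.inl (hF t ht).ne')).const_sub (F a ^ (1 - θ))).const_mul (C / (1 - θ))
    refine h1.congr_deriv ?_
    have h2 : 1 - θ - 1 = -θ := by ring
    rw [h2]
    field_simp
    rfl
  refine image_norm_le_of_norm_deriv_right_le_deriv_boundary' (f := fun t => ξ t - ξ a)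
    (f' := fun t => -(gradient f (ξ t)))
    (fun t ht => ((hflow t ht).sub_const _).continuousAt.continuousWithinAt)
    (fun t ht => ((hflow t ⟨ht.1, ht.2.le⟩).sub_const _).hasDerivWithinAt) (a := a) (b := b)
    (B := fun t => C / (1 - θ) * (F a ^ (1 - θ) - F t ^ (1 - θ)))
    (B' := fun t => C * (F t ^ (-θ) * ‖gradient f (ξ t)‖ ^ 2)) (by simp)
    (fun t ht => (hB t ht).continuousAt.continuousWithinAt)
    (fun t ht => (hB t ⟨ht.1, ht.2.le⟩).hasDerivWithinAt) ?_ (Set.right_mem_Icc.2 hab)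
  intro t ht
  have ht' : t ∈ Set.Icc a b := ⟨ht.1, ht.2.le⟩
  rw [norm_neg]
  have h3 := hL t ht'
  have h4 : 0 < F t ^ (-θ) := Real.rpow_pos_of_pos (hF t ht') _
  have h5 : F t ^ (-θ) * F t ^ θ = 1 := by
    rw [← Real.rpow_add (hF t ht'), neg_add_cancel, Real.rpow_zero]
  have h6 : 1 ≤ F t ^ (-θ) * (C * ‖gradient f (ξ t)‖) := by
    rw [← h5]
    exact mul_le_mul_of_nonneg_left h3 h4.le
  calc ‖gradient f (ξ t)‖ = 1 * ‖gradient f (ξ t)‖ := (one_mul _).symm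
    _ ≤ F t ^ (-θ) * (C * ‖gradient f (ξ t)‖) * ‖gradient f (ξ t)‖ :=
      mul_le_mul_of_nonneg_right h6 (norm_nonneg _)
    _ = C * (F t ^ (-θ) * ‖gradient f (ξ t)‖ ^ 2) := by ring

/-- Polynomial decay of the energy excess under the Łojasiewicz inequality with exponent
`θ > 1/2`: the quantity `F ^ (1 - 2 * θ)` grows at least linearly. -/
lemma energy_decay (hf : Differentiable ℝ f) {θ C a b : ℝ} (hθ : 1 / 2 < θ) (hC : 0 < C)
    (hab : a ≤ b)
    (hflow : ∀ t ∈ Set.Icc a b, HasDerivAt ξ (-(gradient f (ξ t))) t)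
    (hF : ∀ t ∈ Set.Icc a b, 0 < f (ξ t) - f y)
    (hL : ∀ t ∈ Set.Icc a b, (f (ξ t) - f y) ^ θ ≤ C * ‖gradient f (ξ t)‖) :
    (2 * θ - 1) / C ^ 2 * (b - a) ≤ (f (ξ b) - f y) ^ (1 - 2 * θ) := by
  set F : ℝ → ℝ := fun t => f (ξ t) - f y with hFdef
  have hd : ∀ t ∈ Set.Icc a b, HasDerivAt
      (fun t => (2 * θ - 1) / C ^ 2 * (t - a) - F t ^ (1 - 2 * θ))
      ((2 * θ - 1) / C ^ 2 - (2 * θ - 1) * (F t ^ (-(2 * θ)) * ‖gradient f (ξ t)‖ ^ 2)) t := by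
    intro t ht
    have h1 := (((hasDerivAt_id t).sub_const a).const_mul ((2 * θ - 1) / C ^ 2)).sub
      ((hasDerivAt_energy (y := y) hf (hflow t ht)).rpow_const (p := 1 - 2 * θ)
        (Or.inl (hF t ht).ne'))
    refine h1.congr_deriv ?_
    have h2 : 1 - 2 * θ - 1 = -(2 * θ) := by ring
    rw [h2]
    ring
  have h := le_of_deriv_nonpos hd (fun t ht => ?_) a ⟨le_rfl, hab⟩
  · have h0 : 0 < F a ^ (1 - 2 * θ) := Real.rpow_pos_of_pos (hF a ⟨le_rfl, hab⟩) _
    simp only [sub_self, mul_zero, zero_sub] at h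
    change (2 * θ - 1) / C ^ 2 * (b - a) ≤ F b ^ (1 - 2 * θ)
    linarith
  · have h3 := hL t ht
    have h4 : 0 < F t ^ (-(2 * θ)) := Real.rpow_pos_of_pos (hF t ht) _
    have h5 : F t ^ (-(2 * θ)) * (F t ^ θ) ^ 2 = 1 := by
      rw [← Real.rpow_natCast (F t ^ θ), ← Real.rpow_mul (hF t ht).le,
        ← Real.rpow_add (hF t ht)]
      have : -(2 * θ) + θ * ((2 : ℕ) : ℝ) = 0 := by push_cast; ring
      rw [this, Real.rpow_zero]
    have h6 : (F t ^ θ) ^ 2 ≤ (C * ‖gradient f (ξ t)‖) ^ 2 :=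
      pow_le_pow_left₀ (Real.rpow_nonneg (hF t ht).le _) h3 2
    have h7 : 1 / C ^ 2 ≤ F t ^ (-(2 * θ)) * ‖gradient f (ξ t)‖ ^ 2 := by
      rw [div_le_iff₀ (by positivity), ← h5]
      calc _ ≤ F t ^ (-(2 * θ)) * (C * ‖gradient f (ξ t)‖) ^ 2 :=
            mul_le_mul_of_nonneg_left h6 h4.le
        _ = _ := by ring
    have h8 : (2 * θ - 1) / C ^ 2 = (2 * θ - 1) * (1 / C ^ 2) := by ring
    rw [h8]
    have := mul_le_mul_of_nonneg_left h7 (by linarith : 0 ≤ 2 * θ - 1)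
    linarith

end Flow

/-- Convergence at a polynomial rate, given a sequential limit at which `f` is analytic. -/
lemma flow_converges {n : ℕ} {f : EuclideanSpace ℝ (Fin n) → ℝ} {y : EuclideanSpace ℝ (Fin n)}
    {ξ : ℝ → EuclideanSpace ℝ (Fin n)} (hf : Differentiable ℝ f) (hy : AnalyticAt ℝ f y)
    (hflow : ∀ t : ℝ, 0 ≤ t → HasDerivAt ξ (-(gradient f (ξ t))) t)
    {ts : ℕ → ℝ} (hts : Tendsto ts atTop atTop)
    (hseq : Tendsto (fun i => ξ (ts i)) atTop (𝓝 y)) :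
    ∃ β : ℝ, 0 < β ∧ ∃ C : ℝ, 0 < C ∧ ∃ T : ℝ, 0 ≤ T ∧
      ∀ t : ℝ, T < t → ‖ξ t - y‖ ≤ C * (t - T) ^ (-β) := by
  set F : ℝ → ℝ := fun t => f (ξ t) - f y with hFdef
  have hFanti : ∀ s t, 0 ≤ s → s ≤ t → F t ≤ F s := fun s t hs hst =>
    le_of_deriv_nonpos (g := F) (fun u hu => hasDerivAt_energy (y := y) hf (hflow u (hs.trans hu.1)))
      (fun u _ => neg_nonpos.2 (sq_nonneg _)) s ⟨le_rfl, hst⟩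
  have hFts : Tendsto (fun i => F (ts i)) atTop (𝓝 0) := by
    have h1 := (hf.continuous.tendsto y).comp hseq
    have h2 := h1.sub_const (f y)
    rwa [sub_self] at h2
  have hF0 : ∀ t, 0 ≤ t → 0 ≤ F t := by
    intro t ht
    refine le_of_tendsto hFts ?_
    filter_upwards [hts.eventually_ge_atTop t] with i hi using hFanti t _ ht hi
  by_cases hzero : ∃ t₀, 0 ≤ t₀ ∧ F t₀ = 0
  · -- The energy is exhausted in finite time, and the trajectory is constant afterwards.
    obtain ⟨t₀, ht₀, hFt₀⟩ := hzero
    have hFz : ∀ t, t₀ ≤ t → F t = 0 := fun t ht =>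
      le_antisymm (hFt₀ ▸ hFanti t₀ t ht₀ ht) (hF0 t (ht₀.trans ht))
    have hgz : ∀ t, t₀ < t → gradient f (ξ t) = 0 := by
      intro t ht
      have h1 := hasDerivAt_energy (y := y) hf (hflow t (ht₀.trans ht.le))
      have h2 : HasDerivAt (fun s => f (ξ s) - f y) 0 t := by
        refine (hasDerivAt_const t (0 : ℝ)).congr_of_eventuallyEq ?_
        filter_upwards [lt_mem_nhds ht] with s hs using hFz s hs.le
      have h3 := h1.unique h2
      rwa [neg_eq_zero, sq_eq_zero_iff, norm_eq_zero] at h3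
    have hconst : ∀ s t, t₀ < s → s ≤ t → ξ t = ξ s := by
      intro s t hs hst
      refine constant_of_has_deriv_right_zero (f := ξ) (a := s) (b := t)
        (fun u hu => (hflow u (ht₀.trans (hs.le.trans hu.1))).continuousAt.continuousWithinAt)
        (fun u hu => ?_) t ⟨hst, le_rfl⟩
      have h1 := hflow u (ht₀.trans (hs.le.trans hu.1))
      rw [hgz u (hs.trans_le hu.1), neg_zero] at h1
      exact h1.hasDerivWithinAt
    refine ⟨1, one_pos, 1, one_pos, t₀, ht₀, fun t ht => ?_⟩
    have h1 : ξ t = y := by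
      refine tendsto_nhds_unique (tendsto_const_nhds.congr' ?_) hseq
      filter_upwards [hts.eventually_ge_atTop t] with i hi using (hconst t _ ht hi).symm
    rw [h1, sub_self, norm_zero]
    have : 0 < t - t₀ := by linarith
    positivity
  · have hFpos : ∀ t, 0 ≤ t → 0 < F t := fun t ht =>
      lt_of_le_of_ne (hF0 t ht) (fun h => hzero ⟨t, ht, h.symm⟩)
    obtain ⟨θ, C, hθ, hθ1, hC, hL⟩ := lojasiewicz hy
    obtain ⟨r, hr, hball⟩ := Metric.eventually_nhds_iff_ball.1 hL
    have h1θ : 0 < 1 - θ := by linarith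
    set K := C / (1 - θ) with hK
    have hKpos : 0 < K := by positivity
    have hLt : ∀ t, 0 ≤ t → ξ t ∈ Metric.ball y r → (F t) ^ θ ≤ C * ‖gradient f (ξ t)‖ := by
      intro t ht hb
      have := hball _ hb
      rwa [abs_of_nonneg (hF0 t ht)] at this
    -- A time from which the remaining length is too small to leave the ball.
    obtain ⟨T, hT0, hTr⟩ : ∃ T, 0 ≤ T ∧ ‖ξ T - y‖ + K * F T ^ (1 - θ) < r := by
      have h1 : Tendsto (fun i => ‖ξ (ts i) - y‖ + K * F (ts i) ^ (1 - θ)) atTop (𝓝 0) := by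
        have h2 := (hseq.sub_const y).norm
        have h3 := (hFts.rpow_const (p := 1 - θ) (Or.inr h1θ.le)).const_mul K
        have h4 := h2.add h3
        rwa [sub_self, norm_zero, Real.zero_rpow h1θ.ne', mul_zero, zero_add] at h4
      obtain ⟨i, hi, hi'⟩ := ((hts.eventually_ge_atTop 0).and (h1.eventually_lt_const hr)).exists
      exact ⟨ts i, hi, hi'⟩
    have hIcc : ∀ b, T ≤ b → (∀ t ∈ Set.Ico T b, ξ t ∈ Metric.ball y r) →
        ξ b ∈ Metric.ball y r := by
      intro b hb hin
      -- The estimate on `[T, s]` for `s < b` passes to the limit `s → b`.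
      rcases hb.eq_or_lt with rfl | hlt
      · rw [mem_ball_iff_norm]
        have : 0 ≤ K * F T ^ (1 - θ) := mul_nonneg hKpos.le (Real.rpow_nonneg (hF0 T hT0) _)
        linarith
      have h1 : ∀ s ∈ Set.Ico T b, ‖ξ s - ξ T‖ ≤ K * F T ^ (1 - θ) := by
        intro s hs
        have hsub : ∀ t ∈ Set.Icc T s, t ∈ Set.Ico T b := fun t ht => ⟨ht.1, ht.2.trans_lt hs.2⟩
        have h2 := dist_le_drop (y := y) hf hθ1 hC hs.1
          (fun t ht => hflow t (hT0.trans ht.1)) (fun t ht => hFpos t (hT0.trans ht.1))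
          (fun t ht => hLt t (hT0.trans ht.1) (hin t (hsub t ht)))
        refine h2.trans (mul_le_mul_of_nonneg_left ?_ hKpos.le)
        have := Real.rpow_nonneg (hF0 s (hT0.trans hs.1)) (1 - θ)
        change F T ^ (1 - θ) - F s ^ (1 - θ) ≤ _
        linarith
      have h3 : ‖ξ b - ξ T‖ ≤ K * F T ^ (1 - θ) := by
        have hc : Tendsto (fun s => ‖ξ s - ξ T‖) (𝓝[<] b) (𝓝 ‖ξ b - ξ T‖) :=
          (((hflow b (hT0.trans hb)).continuousAt.sub continuousAt_const).norm).mono_left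
            nhdsWithin_le_nhds
        refine le_of_tendsto hc ?_
        filter_upwards [Ico_mem_nhdsLT hlt] with s hs using h1 s hs
      rw [mem_ball_iff_norm]
      calc ‖ξ b - y‖ = ‖(ξ b - ξ T) + (ξ T - y)‖ := by rw [sub_add_sub_cancel]
        _ ≤ ‖ξ b - ξ T‖ + ‖ξ T - y‖ := norm_add_le _ _
        _ < r := by linarith
    have htrap : ∀ t, T ≤ t → ξ t ∈ Metric.ball y r := by
      by_contra hcon
      push Not at hcon
      -- The infimum of the exit times would itself lie in the open ball.
      set S := {t | T ≤ t ∧ ξ t ∉ Metric.ball y r} with hS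
      have hSne : S.Nonempty := hcon
      have hSb : BddBelow S := ⟨T, fun t ht => ht.1⟩
      have hTS : T ≤ sInf S := le_csInf hSne fun t ht => ht.1
      have h1 : ξ (sInf S) ∈ Metric.ball y r := by
        refine hIcc _ hTS fun t ht => ?_
        by_contra hb
        exact absurd (csInf_le hSb ⟨ht.1, hb⟩) (not_le.2 ht.2)
      have h2 : ∀ᶠ t in 𝓝 (sInf S), ξ t ∈ Metric.ball y r :=
        (hflow _ (hT0.trans hTS)).continuousAt.eventually (Metric.isOpen_ball.mem_nhds h1)
      obtain ⟨ε, hε, hε'⟩ := Metric.eventually_nhds_iff_ball.1 h2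
      obtain ⟨t, htS, ht⟩ := exists_lt_of_csInf_lt hSne (lt_add_of_pos_right (sInf S) hε)
      refine htS.2 (hε' t ?_)
      rw [Metric.mem_ball, Real.dist_eq, abs_of_nonneg (sub_nonneg.2 (csInf_le hSb htS))]
      linarith
    have hdist : ∀ t, T ≤ t → ‖ξ t - y‖ ≤ K * F t ^ (1 - θ) := by
      intro t ht
      have h1 : Tendsto (fun i => ‖ξ (ts i) - ξ t‖) atTop (𝓝 ‖y - ξ t‖) :=
        (hseq.sub_const _).norm
      rw [norm_sub_rev]
      refine le_of_tendsto h1 ?_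
      filter_upwards [hts.eventually_ge_atTop t] with i hi
      have h2 := dist_le_drop (y := y) hf hθ1 hC hi
        (fun u hu => hflow u (hT0.trans (ht.trans hu.1)))
        (fun u hu => hFpos u (hT0.trans (ht.trans hu.1)))
        (fun u hu => hLt u (hT0.trans (ht.trans hu.1)) (htrap u (ht.trans hu.1)))
      refine h2.trans (mul_le_mul_of_nonneg_left ?_ hKpos.le)
      have := Real.rpow_nonneg (hF0 (ts i) (hT0.trans (ht.trans hi))) (1 - θ)
      change F t ^ (1 - θ) - F (ts i) ^ (1 - θ) ≤ _
      linarith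
    have h2θ : 0 < 2 * θ - 1 := by linarith
    set c := (2 * θ - 1) / C ^ 2 with hc
    have hcpos : 0 < c := by positivity
    set β := (1 - θ) / (2 * θ - 1) with hβ
    have hβpos : 0 < β := by positivity
    refine ⟨β, hβpos, K * c ^ (-β), by positivity, T, hT0, fun t ht => ?_⟩
    have h1 : c * (t - T) ≤ F t ^ (1 - 2 * θ) := energy_decay hf hθ hC ht.le
      (fun u hu => hflow u (hT0.trans hu.1)) (fun u hu => hFpos u (hT0.trans hu.1))
      (fun u hu => hLt u (hT0.trans hu.1) (htrap u hu.1))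
    have htT : 0 < t - T := by linarith
    have h2 : (F t ^ (1 - 2 * θ)) ^ (-β) ≤ (c * (t - T)) ^ (-β) :=
      Real.rpow_le_rpow_of_nonpos (by positivity) h1 (by linarith)
    rw [← Real.rpow_mul (hF0 t (hT0.trans ht.le)), Real.mul_rpow hcpos.le htT.le] at h2
    have h3 : (1 - 2 * θ) * (-β) = 1 - θ := by rw [hβ]; field_simp; ring
    rw [h3] at h2
    calc ‖ξ t - y‖ ≤ K * F t ^ (1 - θ) := hdist t ht.le
      _ ≤ K * (c ^ (-β) * (t - T) ^ (-β)) := mul_le_mul_of_nonneg_left h2 hKpos.le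
      _ = _ := by ring

end GradFlow

/-- If a negative gradient flow trajectory of a C¹ function `f : ℝⁿ → ℝ`
has a sequential limit `y` which is a critical point near which `f` is real analytic, then
the whole trajectory converges to `y` at a polynomial rate; in particular the asymptotic
limit is unique. -/
theorem sequential_limit_implies_full_convergence
    (n : ℕ) (f : EuclideanSpace ℝ (Fin n) → ℝ)
    (hf : ContDiff ℝ 1 f)
    (y : EuclideanSpace ℝ (Fin n))
    (hcrit : gradient f y = 0)
    (hanal : ∃ V : Set (EuclideanSpace ℝ (Fin n)),
      IsOpen V ∧ y ∈ V ∧ AnalyticOnNhd ℝ f V)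
    (ξ : ℝ → EuclideanSpace ℝ (Fin n))
    (hflow : ∀ t : ℝ, 0 ≤ t → HasDerivAt ξ (-(gradient f (ξ t))) t)
    (ts : ℕ → ℝ) (hts : Filter.Tendsto ts Filter.atTop Filter.atTop)
    (hseq : Filter.Tendsto (fun i => ξ (ts i)) Filter.atTop (nhds y)) :
    Filter.Tendsto ξ Filter.atTop (nhds y) ∧
    ∃ β : ℝ, 0 < β ∧ ∃ C : ℝ, 0 < C ∧ ∃ T : ℝ, 0 ≤ T ∧
      ∀ t : ℝ, T < t → ‖ξ t - y‖ ≤ C * (t - T) ^ (-β) := by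
  obtain ⟨V, -, hyV, hV⟩ := hanal
  obtain ⟨β, hβ, C, hC, T, hT, hrate⟩ :=
    GradFlow.flow_converges (hf.differentiable one_ne_zero) (hV y hyV) hflow hts hseq
  refine ⟨?_, β, hβ, C, hC, T, hT, hrate⟩
  rw [tendsto_iff_norm_sub_tendsto_zero]
  refine squeeze_zero' (Filter.Eventually.of_forall fun t => norm_nonneg _)
    ((Filter.eventually_gt_atTop T).mono hrate) ?_
  have h1 : Filter.Tendsto (fun t : ℝ => t - T) Filter.atTop Filter.atTop :=
    Filter.tendsto_atTop_add_const_right _ (-T) Filter.tendsto_id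
  have h2 := ((tendsto_rpow_neg_atTop hβ).comp h1).const_mul C
  rwa [mul_zero] at h2
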